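/- Let L > 0, Ω = (−L,L)^d, Q = Ω × [0,1], and let ρ_0, ρ_1 : ℝ^d → [0,1] be measurable with compact support contained in Ω and equal positive integrals. Let ψ : ℝ^d → ℝ be convex and T Borel with ∇ψ(x) = T(x) for Lebesgue-a.e. x and T_#(ρ_0 dx) = ρ_1 dx, and let μ_t = ((1−t)·id + t·T)_#(ρ_0 dx). Call a pair (c, v) admissible if c : Q → [0,1] and v : Q → ℝ^d are measurable, ∫_Q c|v|² dx dt < ∞, and for every function φ continuously differentiable on the closure of Q, ∫_0^1 ∫_Ω c (∂_t φ + v·∇φ) dx dt = ∫_Ω ρ_1(x) φ(x,1) dx − ∫_Ω ρ_0(x) φ(x,0) dx. Then the infimum of the relaxed action K(c,v) = ∫_0^1 ∫_Ω ½ c |v|² dx dt over admissible pairs equals ½ d_W(ρ_0 dx, ρ_1 dx)²; this infimum is attained by an admissible pair (c,v) with c(·,t) dx = μ_t for all t ∈ [0,1]; and moreover every minimizing admissible pair (c,v) satisfies c(·,t) dx = μ_t for a.e. t ∈ [0,1]. -/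

import Mathlib

open Set MeasureTheory
open scoped ENNReal RealInnerProductSpace

/-- The squared quadratic Wasserstein cost between two measures on `ℝ^d`: the infimum
over couplings of the integral of `|x − y|²`. -/
noncomputable def W2sq {d : ℕ}
    (μ ν : Measure (EuclideanSpace ℝ (Fin d))) : ℝ≥0∞ :=
  sInf { C | ∃ π : Measure (EuclideanSpace ℝ (Fin d) × EuclideanSpace ℝ (Fin d)),
    π.map Prod.fst = μ ∧ π.map Prod.snd = ν ∧
    C = ∫⁻ q, ENNReal.ofReal (‖q.1 - q.2‖ ^ 2) ∂π }

/-- The open box `Ω = (−L,L)^d` in `ℝ^d`. -/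
def box (d : ℕ) (L : ℝ) : Set (EuclideanSpace ℝ (Fin d)) :=
  { x | ∀ j, x j ∈ Ioo (-L) L }

/-- Admissibility for the relaxed two-fluid (fluid–vacuum) least-action principle in the
box `Ω = (−L,L)^d`: the concentration `c` takes values in `[0,1]` on `Q = Ω × [0,1]`, the
action is finite, and the weak transport constraint with no-flux boundary and endpoint
data `ρ₀, ρ₁` holds against all test functions `φ` that are `C¹` on the closure of `Q`
(here: restrictions of globally `C¹` functions). -/
def RelaxedAdmissible {d : ℕ} (L : ℝ) (ρ₀ ρ₁ : EuclideanSpace ℝ (Fin d) → ℝ)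
    (c : EuclideanSpace ℝ (Fin d) → ℝ → ℝ)
    (v : EuclideanSpace ℝ (Fin d) → ℝ → EuclideanSpace ℝ (Fin d)) : Prop :=
  Measurable (fun q : EuclideanSpace ℝ (Fin d) × ℝ => c q.1 q.2) ∧
  Measurable (fun q : EuclideanSpace ℝ (Fin d) × ℝ => v q.1 q.2) ∧
  (∀ x ∈ box d L, ∀ t ∈ Icc (0:ℝ) 1, c x t ∈ Icc (0:ℝ) 1) ∧
  (∫⁻ t in Icc (0:ℝ) 1, ∫⁻ x in box d L,
      ENNReal.ofReal (c x t * ‖v x t‖ ^ 2)) < ⊤ ∧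
  ∀ φ : EuclideanSpace ℝ (Fin d) → ℝ → ℝ,
    ContDiff ℝ 1 (fun z : EuclideanSpace ℝ (Fin d) × ℝ => φ z.1 z.2) →
    (∫ t in Icc (0:ℝ) 1, ∫ x in box d L, c x t *
        (deriv (fun s => φ x s) t + ⟪v x t, gradient (fun y => φ y t) x⟫)) =
      (∫ x in box d L, ρ₁ x * φ x 1) - (∫ x in box d L, ρ₀ x * φ x 0)

/-!
Let `φ` be the Hopf–Lax solution of `∂ₜφ + ½|∇φ|² = 0` issuing from the Kantorovich potential
`ψ - ½|·|²`. Read off at the rescaled time `ε + (1 - 2ε)t`, it is `C¹` up to the endpoints. Testing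
the continuity equation of an arbitrary flow with it and letting `ε → 0` bounds the action from
below by `½ ∫ |T x - x|² ρ₀(x) dx`, which is `½ d_W²` by the same potential. The displacement
interpolation attains the bound. It is admissible because its density is at most `1`: if `S` is
inverse to `x ↦ (1 - t) x + t T x`, then `(1 - t) S' + t (T ∘ S)'` is the identity, so by the
inequality of arithmetic and geometric means `S` or `T ∘ S` does not expand volume.

For uniqueness, perturb `ψ` to `ψ + kη` with `η x = cos (⟪ξ, x⟫ + b)`. The first-order condition
in `k` shows that a minimizing flow, pulled back along the interpolation map, has the same cosine
moments as the product of `ρ₀ dx` with Lebesgue measure in time.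
-/

section ConvexAnalysis

variable {E : Type*} [NormedAddCommGroup E] [InnerProductSpace ℝ E]

/-- `p` is a subgradient of `ψ` at `x`. -/
def IsSubgradientAt (ψ : E → ℝ) (p x : E) : Prop :=
  ∀ z, ψ x + ⟪p, z - x⟫ ≤ ψ z

theorem isSubgradientAt_of_convexOn_of_hasGradientAt [CompleteSpace E] {ψ : E → ℝ} {x g : E}
    (hψ : ConvexOn ℝ univ ψ) (h : HasGradientAt ψ g x) : IsSubgradientAt ψ g x := by
  intro z
  have hline : HasDerivAt (ψ ∘ AffineMap.lineMap x z) ⟪g, z - x⟫ (0 : ℝ) := by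
    have hx : HasFDerivAt ψ (InnerProductSpace.toDual ℝ E g) (AffineMap.lineMap x z (0 : ℝ)) := by
      simpa using h.hasFDerivAt
    simpa using hx.comp_hasDerivAt (0 : ℝ) AffineMap.hasDerivAt_lineMap
  have hslope := (hψ.comp_affineMap (AffineMap.lineMap x z)).le_slope_of_hasDerivAt
    (mem_univ 0) (mem_univ 1) zero_lt_one hline
  simp only [slope_def_field, Function.comp_apply, AffineMap.lineMap_apply_one,
    AffineMap.lineMap_apply_zero, sub_zero, div_one] at hslope
  linarith

theorem IsSubgradientAt.eq_of_hasGradientAt [CompleteSpace E] {ψ : E → ℝ} {x g p : E}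
    (hp : IsSubgradientAt ψ p x) (h : HasGradientAt ψ g x) : p = g := by
  have hmin : IsLocalMin (fun z => ψ z - ⟪p, z⟫) x := Filter.Eventually.of_forall fun z => by
    have := hp z
    rw [inner_sub_right] at this
    linarith
  have hzero := hmin.hasFDerivAt_eq_zero (h.hasFDerivAt.sub (innerSL ℝ p).hasFDerivAt)
  refine (sub_eq_zero.1 (ext_inner_right ℝ fun v => ?_)).symm
  simpa [inner_sub_left] using DFunLike.congr_fun hzero v

theorem IsSubgradientAt.inner_sub_nonneg {ψ : E → ℝ} {x p x' p' : E} (h : IsSubgradientAt ψ p x)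
    (h' : IsSubgradientAt ψ p' x') : 0 ≤ ⟪x - x', p - p'⟫ := by
  have hx := h x'
  have hx' := h' x
  rw [← neg_sub, inner_neg_right] at hx
  rw [real_inner_comm, inner_sub_left]
  linarith

-- `0 ≤ G q' - G q - s q (q' - q) ≤ (s q' - s q) (q' - q)`, which is `o(q' - q)`.
theorem hasFDerivAt_of_subgradient {X : Type*} [NormedAddCommGroup X] [NormedSpace ℝ X]
    {G : X → ℝ} {s : X → X →L[ℝ] ℝ} {U : Set X} {q : X} (hU : U ∈ nhds q)
    (hcont : ContinuousAt s q) (hsub : ∀ q ∈ U, ∀ q' ∈ U, G q + s q (q' - q) ≤ G q') :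
    HasFDerivAt G (s q) q := by
  rw [hasFDerivAt_iff_isLittleO, Asymptotics.isLittleO_iff]
  intro c hc
  filter_upwards [Metric.continuousAt_iff'.1 hcont c hc, hU] with q' hclose hq'
  have hlower := hsub q (mem_of_mem_nhds hU) q' hq'
  have hupper := hsub q' hq' q (mem_of_mem_nhds hU)
  have hosc : (s q' - s q) (q' - q) ≤ c * ‖q' - q‖ := by
    rw [dist_eq_norm] at hclose
    exact (Real.le_norm_self _).trans ((ContinuousLinearMap.le_opNorm _ _).trans (by gcongr))
  rw [← neg_sub q' q, map_neg] at hupper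
  rw [sub_apply] at hosc
  rw [Real.norm_eq_abs, abs_of_nonneg (by linarith)]
  linarith

theorem add_sq_norm_sub_le_of_strongConvexOn {F : Type*} [NormedAddCommGroup F]
    [NormedSpace ℝ F] {f : F → ℝ} {m : ℝ} {z : F} (hf : StrongConvexOn univ m f)
    (hz : ∀ w, f z ≤ f w) (w : F) : f z + m / 2 * ‖w - z‖ ^ 2 ≤ f w := by
  have hseg : ∀ l ∈ Ioo (0 : ℝ) 1, f z + (1 - l) * (m / 2 * ‖w - z‖ ^ 2) ≤ f w := by
    rintro l ⟨hl0, hl1⟩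
    have hconv := hf.2 (mem_univ z) (mem_univ w) (sub_pos.2 hl1).le hl0.le (by ring)
    have hmin := hz ((1 - l) • z + l • w)
    rw [norm_sub_rev] at hconv
    simp only [smul_eq_mul] at hconv
    refine le_of_mul_le_mul_left ?_ hl0
    linarith
  have hlim : Filter.Tendsto (fun l : ℝ => f z + (1 - l) * (m / 2 * ‖w - z‖ ^ 2))
      (nhdsWithin 0 (Ioi 0)) (nhds (f z + (1 - 0) * (m / 2 * ‖w - z‖ ^ 2))) :=
    (Continuous.tendsto (by fun_prop) 0).mono_left nhdsWithin_le_nhds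
  simpa using le_of_tendsto hlim (Filter.mem_of_superset (Ioo_mem_nhdsGT zero_lt_one) hseg)

theorem exists_affine_le_of_convexOn {ψ : E → ℝ} (hψ : ConvexOn ℝ univ ψ) (hc : Continuous ψ) :
    ∃ (l : E →L[ℝ] ℝ) (b : ℝ), ∀ z, l z + b ≤ ψ z := by
  obtain ⟨l, b, hle, -⟩ := hψ.exists_affine_le_of_lt (𝕜 := ℝ) (mem_univ 0) (sub_one_lt (ψ 0))
    isClosed_univ hc.continuousOn.lowerSemicontinuousOn
  exact ⟨l, b, fun z => hle ⟨z, mem_univ z⟩⟩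

theorem continuous_of_strongConvexOn [FiniteDimensional ℝ E] {f : E → ℝ} {m : ℝ}
    (hf : StrongConvexOn univ m f) : Continuous f := by
  have hconv := (strongConvexOn_iff_convex.1 hf).continuousOn isOpen_univ
  have hcont : Continuous fun z => f z - m / 2 * ‖z‖ ^ 2 := continuousOn_univ.1 hconv
  exact (hcont.add (by fun_prop : Continuous fun z : E => m / 2 * ‖z‖ ^ 2)).congr fun z =>
    sub_add_cancel _ _

theorem exists_forall_le_of_strongConvexOn [FiniteDimensional ℝ E] {f : E → ℝ} {m : ℝ} (hm : 0 < m)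
    (hf : StrongConvexOn univ m f) : ∃ z, ∀ w, f z ≤ f w := by
  obtain ⟨l, b, hle⟩ := exists_affine_le_of_convexOn (strongConvexOn_iff_convex.1 hf)
    ((continuous_of_strongConvexOn hf).sub (by fun_prop))
  refine (continuous_of_strongConvexOn hf).exists_forall_le ?_
  have hquad : Filter.Tendsto (fun r : ℝ => r * (m / 2 * r - ‖l‖) + b) Filter.atTop Filter.atTop :=
    Filter.tendsto_atTop_add_const_right _ _ <| Filter.tendsto_id.atTop_mul_atTop₀ <|
      Filter.tendsto_atTop_add_const_right _ _ <|
        Filter.tendsto_id.const_mul_atTop (half_pos hm)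
  refine Filter.tendsto_atTop_mono (fun z => ?_)
    (hquad.comp (tendsto_norm_cocompact_atTop (E := E)))
  have hz := hle z
  have hl : -(‖l‖ * ‖z‖) ≤ l z := neg_le_of_abs_le (l.le_opNorm z)
  simp only [Function.comp_apply]
  linarith

end ConvexAnalysis

section Perturbation

variable {E : Type*} [NormedAddCommGroup E] [InnerProductSpace ℝ E]

/-- A perturbation of the potential: `η` is bounded by `1`, and both `η` and `-η` are
`C`-semiconvex (strong convexity with a negative modulus). These are the directions in which the
dual potential is varied to obtain uniqueness. -/
structure IsPerturbation (C : ℝ) (η : E → ℝ) : Prop where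
  nonneg : 0 ≤ C
  abs_le_one : ∀ z, |η z| ≤ 1
  strongConvexOn : StrongConvexOn univ (-C) η
  strongConcaveOn : StrongConcaveOn univ (-C) η

namespace IsPerturbation

theorem zero : IsPerturbation 0 (0 : E → ℝ) where
  nonneg := le_rfl
  abs_le_one := by simp
  strongConvexOn := by simpa using! convexOn_const (0 : ℝ) convex_univ
  strongConcaveOn := by simpa using! concaveOn_const (0 : ℝ) convex_univ

theorem neg {C : ℝ} {η : E → ℝ} (h : IsPerturbation C η) : IsPerturbation C (-η) where
  nonneg := h.nonneg
  abs_le_one := by simpa using h.abs_le_one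
  strongConvexOn := UniformConcaveOn.neg h.strongConcaveOn
  strongConcaveOn := UniformConvexOn.neg h.strongConvexOn

theorem continuous [FiniteDimensional ℝ E] {C : ℝ} {η : E → ℝ} (h : IsPerturbation C η) :
    Continuous η :=
  continuous_of_strongConvexOn h.strongConvexOn

theorem strongConvexOn_const_mul {C : ℝ} {η : E → ℝ} (h : IsPerturbation C η) (k : ℝ) :
    StrongConvexOn univ (-(|k| * C)) fun z => k * η z := by
  rw [strongConvexOn_iff_convex]
  rcases le_total 0 k with hk | hk
  · refine ((strongConvexOn_iff_convex.1 h.strongConvexOn).smul hk).congr fun z _ => ?_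
    simp only [abs_of_nonneg hk, smul_eq_mul]
    ring
  · refine ((strongConvexOn_iff_convex.1 h.neg.strongConvexOn).smul (neg_nonneg.2 hk)).congr
      fun z _ => ?_
    simp only [abs_of_nonpos hk, smul_eq_mul, Pi.neg_apply]
    ring

end IsPerturbation

theorem convexOn_cos_add_sq : ConvexOn ℝ univ fun u : ℝ => Real.cos u + u ^ 2 / 2 := by
  have hderiv : deriv (fun u : ℝ => Real.cos u + u ^ 2 / 2) = fun u => u - Real.sin u := by
    ext u
    have h : HasDerivAt (fun u : ℝ => Real.cos u + u ^ 2 / 2) _ u :=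
      (Real.hasDerivAt_cos u).add ((hasDerivAt_pow 2 u).div_const 2)
    rw [h.deriv]
    ring
  refine Monotone.convexOn_univ_of_deriv (by fun_prop) ?_
  rw [hderiv]
  refine monotone_of_deriv_nonneg (by fun_prop) fun u => ?_
  have h : HasDerivAt (fun u : ℝ => u - Real.sin u) _ u :=
    (hasDerivAt_id' u).sub (Real.hasDerivAt_sin u)
  rw [h.deriv]
  exact sub_nonneg.2 (Real.cos_le_one u)

theorem convexOn_sq_norm_mul_sub_sq_inner (ξ : E) :
    ConvexOn ℝ univ fun z : E => ‖ξ‖ ^ 2 * ‖z‖ ^ 2 - ⟪ξ, z⟫ ^ 2 := by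
  refine ⟨convex_univ, fun x _ y _ a b ha hb hab => ?_⟩
  have hcs : ⟪ξ, x - y⟫ ^ 2 ≤ ‖ξ‖ ^ 2 * ‖x - y‖ ^ 2 := by
    rw [← mul_pow, ← sq_abs]
    exact pow_le_pow_left₀ (abs_nonneg _) (abs_real_inner_le_norm ξ (x - y)) 2
  obtain rfl : b = 1 - a := by linarith
  have hnorm : ‖a • x + (1 - a) • y‖ ^ 2
      = a * ‖x‖ ^ 2 + (1 - a) * ‖y‖ ^ 2 - a * (1 - a) * ‖x - y‖ ^ 2 := by
    rw [norm_add_sq_real, norm_sub_sq_real, norm_smul, norm_smul, real_inner_smul_left,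
      inner_smul_right, Real.norm_of_nonneg ha, Real.norm_of_nonneg hb]
    ring
  simp only [smul_eq_mul]
  rw [hnorm, inner_add_right, inner_smul_right, inner_smul_right]
  rw [inner_sub_right] at hcs
  nlinarith [mul_nonneg ha hb]

theorem strongConvexOn_cos_inner_add (ξ : E) (b : ℝ) :
    StrongConvexOn univ (-‖ξ‖ ^ 2) fun z : E => Real.cos (⟪ξ, z⟫ + b) := by
  rw [strongConvexOn_iff_convex]
  have hcos : ConvexOn ℝ univ fun z : E => Real.cos (⟪ξ, z⟫ + b) + (⟪ξ, z⟫ + b) ^ 2 / 2 :=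
    (convexOn_cos_add_sq.translate_left b).comp_linearMap (innerSL ℝ ξ).toLinearMap
  have hquad := (convexOn_sq_norm_mul_sub_sq_inner ξ).smul (one_half_pos (α := ℝ)).le
  have hlin : ConvexOn ℝ univ fun z : E => (-b) * ⟪ξ, z⟫ + -b ^ 2 / 2 :=
    (((-b) • (innerSL ℝ ξ).toLinearMap).convexOn convex_univ).add_const _
  refine ((hcos.add hquad).add hlin).congr fun z _ => ?_
  simp only [Pi.add_apply, smul_eq_mul]
  ring

theorem isPerturbation_cos_inner_add (ξ : E) (b : ℝ) :
    IsPerturbation (‖ξ‖ ^ 2) fun z : E => Real.cos (⟪ξ, z⟫ + b) where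
  nonneg := sq_nonneg _
  abs_le_one _ := Real.abs_cos_le_one _
  strongConvexOn := strongConvexOn_cos_inner_add ξ b
  strongConcaveOn := by
    have h := UniformConvexOn.neg (strongConvexOn_cos_inner_add ξ (b + Real.pi))
    simpa only [← add_assoc, Real.cos_add_pi, Pi.neg_def, neg_neg] using! h

end Perturbation

section LegendreTransform

variable {E : Type*} [NormedAddCommGroup E]

/-- The parameters `(p, a, k)` for which the quadratic term of `pairing η` dominates a perturbation
with semiconvexity constant `C`. -/
def legendreDomain (E : Type*) (C : ℝ) : Set (E × ℝ × ℝ) := {q | |q.2.2| * C < q.2.1}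

theorem isOpen_legendreDomain (C : ℝ) : IsOpen (legendreDomain E C) :=
  isOpen_lt (by fun_prop) (by fun_prop)

variable [InnerProductSpace ℝ E]

/-- The linear functional `(p, a, k) ↦ ⟪p, z⟫ - a‖z‖²/2 - k η(z)`. Making the coefficients of the
quadratic term and of the perturbation dual variables turns all derivatives of the Hopf–Lax
potential, in space and in time, into one derivative of a Legendre transform. -/
noncomputable def pairing (η : E → ℝ) (z : E) : E × ℝ × ℝ →L[ℝ] ℝ :=
  (innerSL ℝ z).coprod
    ((-(‖z‖ ^ 2 / 2) • ContinuousLinearMap.id ℝ ℝ).coprod (-η z • ContinuousLinearMap.id ℝ ℝ))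

theorem pairing_apply (η : E → ℝ) (z p : E) (a k : ℝ) :
    pairing η z (p, a, k) = ⟪p, z⟫ - a / 2 * ‖z‖ ^ 2 - k * η z := by
  simp only [pairing, ContinuousLinearMap.coprod_apply, innerSL_apply_apply, smul_apply,
    ContinuousLinearMap.id_apply, smul_eq_mul, real_inner_comm]
  ring

/-- A maximizer of `z ↦ ⟪p, z⟫ - a‖z‖²/2 - k η(z) - ψ(z)`, where `q = (p, a, k)`. -/
noncomputable def maximizer (ψ η : E → ℝ) (q : E × ℝ × ℝ) : E :=
  Classical.epsilon fun z => ∀ w, ψ z - pairing η z q ≤ ψ w - pairing η w q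

/-- The Legendre transform of `ψ` relative to `pairing η`. -/
noncomputable def legendre (ψ η : E → ℝ) (q : E × ℝ × ℝ) : ℝ :=
  pairing η (maximizer ψ η q) q - ψ (maximizer ψ η q)

theorem maximizer_zero_right (ψ η : E → ℝ) (p : E) (a : ℝ) :
    maximizer ψ η (p, a, 0) = maximizer ψ 0 (p, a, 0) := by
  simp only [maximizer, pairing_apply, zero_mul]

variable {ψ η : E → ℝ} {C : ℝ} {q : E × ℝ × ℝ}

theorem strongConvexOn_sub_pairing (hψ : ConvexOn ℝ univ ψ) (hη : IsPerturbation C η)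
    (q : E × ℝ × ℝ) :
    StrongConvexOn univ (q.2.1 - |q.2.2| * C) fun z => ψ z - pairing η z q := by
  obtain ⟨p, a, k⟩ := q
  rw [strongConvexOn_iff_convex]
  have hpert := strongConvexOn_iff_convex.1 (hη.strongConvexOn_const_mul k)
  have hlin : ConvexOn ℝ univ fun z => -⟪p, z⟫ :=
    (-(innerSL ℝ p).toLinearMap).convexOn convex_univ
  refine ((hψ.add hpert).add hlin).congr fun z _ => ?_
  simp only [Pi.add_apply, pairing_apply]
  ring

theorem IsPerturbation.norm_pairing_sub_le (hη : IsPerturbation C η) (z w : E) :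
    ‖pairing η w - pairing η z‖ ≤ (‖z‖ + 3) * (1 + ‖w - z‖ ^ 2) := by
  set D := ‖w - z‖
  refine ContinuousLinearMap.opNorm_le_bound _ (by positivity) fun q => ?_
  obtain ⟨p, a, k⟩ := q
  have hp : ‖p‖ ≤ ‖(p, a, k)‖ := norm_fst_le (p, a, k)
  have ha : |a| ≤ ‖(p, a, k)‖ := (norm_fst_le (a, k)).trans (norm_snd_le (p, a, k))
  have hk : |k| ≤ ‖(p, a, k)‖ := (norm_snd_le (a, k)).trans (norm_snd_le (p, a, k))
  have hlin : |⟪p, w - z⟫| ≤ ‖(p, a, k)‖ * D := (abs_real_inner_le_norm _ _).trans (by gcongr)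
  have hsq : |‖w‖ ^ 2 - ‖z‖ ^ 2| ≤ D ^ 2 + 2 * (D * ‖z‖) := by
    rw [show ‖w‖ ^ 2 - ‖z‖ ^ 2 = D ^ 2 + 2 * ⟪w - z, z⟫ by
      rw [norm_sub_sq_real, inner_sub_left, real_inner_self_eq_norm_sq]; ring]
    refine (abs_add_le _ _).trans ?_
    rw [abs_of_nonneg (sq_nonneg D), abs_mul, abs_two]
    gcongr
    exact abs_real_inner_le_norm _ _
  have hquad : |a / 2 * (‖w‖ ^ 2 - ‖z‖ ^ 2)| ≤ ‖(p, a, k)‖ / 2 * (D ^ 2 + 2 * (D * ‖z‖)) := by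
    rw [abs_mul, abs_div, abs_two]
    gcongr
  have hpert : |k * (η w - η z)| ≤ ‖(p, a, k)‖ * 2 := by
    rw [abs_mul]
    gcongr
    linarith [abs_sub (η w) (η z), hη.abs_le_one w, hη.abs_le_one z]
  have hdecomp : (pairing η w - pairing η z) (p, a, k)
      = ⟪p, w - z⟫ - a / 2 * (‖w‖ ^ 2 - ‖z‖ ^ 2) - k * (η w - η z) := by
    rw [sub_apply, pairing_apply, pairing_apply, inner_sub_right]
    ring
  rw [Real.norm_eq_abs, hdecomp]
  refine (abs_sub _ _).trans
    ((add_le_add ((abs_sub _ _).trans (add_le_add hlin hquad)) hpert).trans ?_)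
  have hD : D * (1 + ‖z‖) ≤ (1 + D ^ 2) / 2 * (1 + ‖z‖) := by
    gcongr
    nlinarith [sq_nonneg (D - 1)]
  nlinarith [norm_nonneg (p, a, k), mul_nonneg (norm_nonneg z) (sq_nonneg D), norm_nonneg z]

variable [FiniteDimensional ℝ E]

theorem maximizer_spec (hψ : ConvexOn ℝ univ ψ) (hη : IsPerturbation C η)
    (hq : q ∈ legendreDomain E C) (w : E) :
    ψ (maximizer ψ η q) - pairing η (maximizer ψ η q) q ≤ ψ w - pairing η w q :=
  Classical.epsilon_spec
    (exists_forall_le_of_strongConvexOn (sub_pos.2 hq) (strongConvexOn_sub_pairing hψ hη q)) w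

theorem maximizer_eq (hψ : ConvexOn ℝ univ ψ) (hη : IsPerturbation C η)
    (hq : q ∈ legendreDomain E C) {z : E} (hz : ∀ w, ψ z - pairing η z q ≤ ψ w - pairing η w q) :
    maximizer ψ η q = z := by
  have hgrowth := add_sq_norm_sub_le_of_strongConvexOn (strongConvexOn_sub_pairing hψ hη q) hz
    (maximizer ψ η q)
  have hsq : ‖maximizer ψ η q - z‖ ^ 2 ≤ 0 := by
    refine nonpos_of_mul_nonpos_right ?_ (half_pos (sub_pos.2 hq))
    linarith [maximizer_spec hψ hη hq z]
  exact sub_eq_zero.1 (norm_eq_zero.1 (pow_eq_zero_iff two_ne_zero |>.1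
    (hsq.antisymm (sq_nonneg _))))

theorem IsPerturbation.continuous_pairing (hη : IsPerturbation C η) : Continuous (pairing η) := by
  have := hη.continuous
  rw [continuous_clm_apply]
  rintro ⟨p, a, k⟩
  simp only [pairing_apply]
  fun_prop

-- Add the growth inequality at `q` to the optimality of the maximizer at `q'`.
theorem sq_norm_maximizer_sub_le (hψ : ConvexOn ℝ univ ψ) (hη : IsPerturbation C η)
    (hq : q ∈ legendreDomain E C) {q' : E × ℝ × ℝ} (hq' : q' ∈ legendreDomain E C) :
    (q.2.1 - |q.2.2| * C) / 2 * ‖maximizer ψ η q' - maximizer ψ η q‖ ^ 2 ≤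
      (‖maximizer ψ η q‖ + 3) * (1 + ‖maximizer ψ η q' - maximizer ψ η q‖ ^ 2) * ‖q' - q‖ := by
  set S := maximizer ψ η q
  set S' := maximizer ψ η q'
  have hgrowth := add_sq_norm_sub_le_of_strongConvexOn (strongConvexOn_sub_pairing hψ hη q)
    (maximizer_spec hψ hη hq) S'
  have hopt := maximizer_spec hψ hη hq' S
  calc (q.2.1 - |q.2.2| * C) / 2 * ‖S' - S‖ ^ 2
      ≤ (pairing η S' - pairing η S) (q' - q) := by
        rw [sub_apply, map_sub, map_sub]
        linarith
    _ ≤ ‖pairing η S' - pairing η S‖ * ‖q' - q‖ :=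
        (Real.le_norm_self _).trans (ContinuousLinearMap.le_opNorm _ _)
    _ ≤ _ := by gcongr; exact hη.norm_pairing_sub_le S S'

theorem continuousAt_maximizer (hψ : ConvexOn ℝ univ ψ) (hη : IsPerturbation C η)
    (hq : q ∈ legendreDomain E C) : ContinuousAt (maximizer ψ η) q := by
  set m := q.2.1 - |q.2.2| * C
  set K := ‖maximizer ψ η q‖ + 3
  have hm : 0 < m / 2 - K * ‖q - q‖ := by simpa using sub_pos.2 hq
  have hden : ContinuousAt (fun q' => m / 2 - K * ‖q' - q‖) q := by fun_prop
  have hbound : ContinuousAt (fun q' => √(K * ‖q' - q‖ / (m / 2 - K * ‖q' - q‖))) q :=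
    (ContinuousAt.div (by fun_prop) hden hm.ne').sqrt
  rw [ContinuousAt, tendsto_iff_norm_sub_tendsto_zero]
  refine squeeze_zero' (Filter.Eventually.of_forall fun _ => norm_nonneg _) ?_
    (by simpa using hbound.tendsto)
  filter_upwards [(isOpen_legendreDomain C).mem_nhds hq, hden.eventually (lt_mem_nhds hm)]
    with q' hq' hpos
  refine Real.le_sqrt_of_sq_le ?_
  rw [le_div_iff₀ hpos]
  linarith [sq_norm_maximizer_sub_le hψ hη hq hq']

theorem continuousAt_pairing_maximizer (hψ : ConvexOn ℝ univ ψ) (hη : IsPerturbation C η)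
    (hq : q ∈ legendreDomain E C) : ContinuousAt (fun q => pairing η (maximizer ψ η q)) q :=
  hη.continuous_pairing.continuousAt.comp (continuousAt_maximizer hψ hη hq)

theorem hasFDerivAt_legendre (hψ : ConvexOn ℝ univ ψ) (hη : IsPerturbation C η)
    (hq : q ∈ legendreDomain E C) :
    HasFDerivAt (legendre ψ η) (pairing η (maximizer ψ η q)) q := by
  refine hasFDerivAt_of_subgradient (s := fun q => pairing η (maximizer ψ η q))
    ((isOpen_legendreDomain C).mem_nhds hq) (continuousAt_pairing_maximizer hψ hη hq) ?_
  intro q₁ _ q₂ hq₂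
  have := maximizer_spec hψ hη hq₂ (maximizer ψ η q₁)
  simp only [legendre, map_sub]
  linarith

theorem contDiffOn_legendre (hψ : ConvexOn ℝ univ ψ) (hη : IsPerturbation C η) :
    ContDiffOn ℝ 1 (legendre ψ η) (legendreDomain E C) := fun _ hq =>
  (contDiffAt_one_iff.2 ⟨_, _, (isOpen_legendreDomain C).mem_nhds hq,
    fun _ hq' => (continuousAt_pairing_maximizer hψ hη hq').continuousWithinAt,
    fun _ hq' => hasFDerivAt_legendre hψ hη hq'⟩).contDiffWithinAt

end LegendreTransform

section HopfLax

variable {E : Type*} [NormedAddCommGroup E] [InnerProductSpace ℝ E] {ψ η : E → ℝ} {C : ℝ}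

/-- The Hopf–Lax potential `inf_z a‖y - z‖²/2 + ψ(z) - ‖z‖²/2 + k η(z)`, with `a` the inverse of
the time variable, written in terms of the Legendre transform by expanding the square. -/
noncomputable def hopfLax (ψ η : E → ℝ) (a k : ℝ) (y : E) : ℝ :=
  a / 2 * ‖y‖ ^ 2 - legendre ψ η (a • y, a - 1, k)

/-- The point at which the infimum defining `hopfLax ψ η a k y` is attained. -/
noncomputable def hopfLaxPoint (ψ η : E → ℝ) (a k : ℝ) (y : E) : E :=
  maximizer ψ η (a • y, a - 1, k)

theorem sub_pairing_eq (a k : ℝ) (y z : E) :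
    ψ z - pairing η z (a • y, a - 1, k) =
      a / 2 * ‖y - z‖ ^ 2 + ψ z - ‖z‖ ^ 2 / 2 + k * η z - a / 2 * ‖y‖ ^ 2 := by
  rw [pairing_apply, norm_sub_sq_real, real_inner_smul_left]
  ring

theorem hopfLax_eq (ψ η : E → ℝ) (a k : ℝ) (y : E) :
    hopfLax ψ η a k y = a / 2 * ‖y - hopfLaxPoint ψ η a k y‖ ^ 2 + ψ (hopfLaxPoint ψ η a k y)
      - ‖hopfLaxPoint ψ η a k y‖ ^ 2 / 2 + k * η (hopfLaxPoint ψ η a k y) := by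
  have := sub_pairing_eq (ψ := ψ) (η := η) a k y (hopfLaxPoint ψ η a k y)
  rw [hopfLax, legendre, ← hopfLaxPoint]
  linarith

theorem le_hopfLax_of_isSubgradientAt {x p : E} (hp : IsSubgradientAt ψ p x) (η : E → ℝ) {a : ℝ}
    (ha : 1 ≤ a) : ψ x - ‖x‖ ^ 2 / 2 + ‖p - x‖ ^ 2 / 2 ≤ hopfLax ψ η a 0 p := by
  rw [hopfLax_eq]
  generalize hopfLaxPoint ψ η a 0 p = z
  have hz := hp z
  have hsq : 0 ≤ (a - 1) * ‖p - z‖ ^ 2 := mul_nonneg (sub_nonneg.2 ha) (sq_nonneg _)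
  rw [inner_sub_right] at hz
  rw [norm_sub_sq_real] at hsq ⊢
  rw [norm_sub_sq_real]
  nlinarith

variable [FiniteDimensional ℝ E]

theorem hopfLax_le (hψ : ConvexOn ℝ univ ψ) (hη : IsPerturbation C η) {a k : ℝ}
    (h : |k| * C < a - 1) (x y : E) :
    hopfLax ψ η a k y ≤ a / 2 * ‖y - x‖ ^ 2 + ψ x - ‖x‖ ^ 2 / 2 + k * η x := by
  have hmax := maximizer_spec hψ hη (q := (a • y, a - 1, k)) h x
  rw [sub_pairing_eq a k y x] at hmax
  rw [hopfLax, legendre]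
  linarith

theorem hasGradientAt_hopfLax (hψ : ConvexOn ℝ univ ψ) (hη : IsPerturbation C η) {a k : ℝ}
    (h : |k| * C < a - 1) (y : E) :
    HasGradientAt (hopfLax ψ η a k) (a • (y - hopfLaxPoint ψ η a k y)) y := by
  have hparam : HasFDerivAt (fun y : E => (a • y, a - 1, k))
      ((a • ContinuousLinearMap.id ℝ E).prod 0) y :=
    ((hasFDerivAt_id y).const_smul a).prodMk (hasFDerivAt_const _ _)
  have hlegendre := (hasFDerivAt_legendre hψ hη (q := (a • y, a - 1, k)) h).comp y hparam
  have hsq : HasFDerivAt (fun y : E => a / 2 * ‖y‖ ^ 2) ((a / 2) • (2 • innerSL ℝ y)) y :=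
    (hasStrictFDerivAt_norm_sq y).hasFDerivAt.const_mul (a / 2)
  rw [hasGradientAt_iff_hasFDerivAt]
  refine (hsq.sub hlegendre).congr_fderiv ?_
  ext v
  have hpair : pairing η (maximizer ψ η (a • y, a - 1, k)) (a • v, 0) =
      a * ⟪maximizer ψ η (a • y, a - 1, k), v⟫ := by
    rw [← Prod.mk_zero_zero, pairing_apply, real_inner_smul_left, real_inner_comm]
    ring
  simp [hopfLaxPoint, hpair]
  ring

theorem continuous_hopfLax (hψ : ConvexOn ℝ univ ψ) (hη : IsPerturbation C η) {a k : ℝ}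
    (h : |k| * C < a - 1) : Continuous (hopfLax ψ η a k) :=
  continuous_iff_continuousAt.2 fun y => (hasGradientAt_hopfLax hψ hη h y).hasFDerivAt.continuousAt

theorem hasDerivAt_hopfLax (hψ : ConvexOn ℝ univ ψ) (hη : IsPerturbation C η) {α k : ℝ → ℝ}
    {α' k' t : ℝ} (h : |k t| * C < α t - 1) (hα : HasDerivAt α α' t) (hk : HasDerivAt k k' t)
    (y : E) :
    HasDerivAt (fun s => hopfLax ψ η (α s) (k s) y)
      (α' / 2 * ‖y - hopfLaxPoint ψ η (α t) (k t) y‖ ^ 2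
        + k' * η (hopfLaxPoint ψ η (α t) (k t) y)) t := by
  have hparam : HasDerivAt (fun s => (α s • y, α s - 1, k s)) (α' • y, α', k') t :=
    (hα.smul_const y).prodMk ((hα.sub_const 1).prodMk hk)
  have hlegendre := (hasFDerivAt_legendre hψ hη (q := (α t • y, α t - 1, k t)) h).comp_hasDerivAt t
    hparam
  refine (((hα.div_const 2).mul_const (‖y‖ ^ 2)).sub hlegendre).congr_deriv ?_
  rw [hopfLaxPoint, pairing_apply, norm_sub_sq_real, real_inner_smul_left]
  ring

theorem contDiffOn_hopfLax (hψ : ConvexOn ℝ univ ψ) (hη : IsPerturbation C η) {α k : ℝ → ℝ}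
    {U : Set ℝ} (h : ∀ t ∈ U, |k t| * C < α t - 1) (hα : ContDiffOn ℝ 1 α U)
    (hk : ContDiffOn ℝ 1 k U) :
    ContDiffOn ℝ 1 (fun z : E × ℝ => hopfLax ψ η (α z.2) (k z.2) z.1) (univ ×ˢ U) := by
  have hα' : ContDiffOn ℝ 1 (fun z : E × ℝ => α z.2) (univ ×ˢ U) :=
    hα.comp contDiffOn_snd fun z hz => hz.2
  have hk' : ContDiffOn ℝ 1 (fun z : E × ℝ => k z.2) (univ ×ˢ U) :=
    hk.comp contDiffOn_snd fun z hz => hz.2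
  have hparam : ContDiffOn ℝ 1 (fun z : E × ℝ => (α z.2 • z.1, α z.2 - 1, k z.2)) (univ ×ˢ U) :=
    (hα'.smul contDiffOn_fst).prodMk ((hα'.sub contDiffOn_const).prodMk hk')
  exact ((hα'.div_const 2).mul (contDiffOn_fst.norm_sq ℝ)).sub
    ((contDiffOn_legendre hψ hη).comp hparam fun z hz => h z.2 hz.2)

theorem continuousAt_hopfLaxPoint (hψ : ConvexOn ℝ univ ψ) (hη : IsPerturbation C η) {a k : ℝ}
    (h : |k| * C < a - 1) (y : E) :
    ContinuousAt (fun q : ℝ × ℝ × E => hopfLaxPoint ψ η q.1 q.2.1 q.2.2) (a, k, y) :=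
  ContinuousAt.comp (f := fun q : ℝ × ℝ × E => (q.1 • q.2.2, q.1 - 1, q.2.1))
    (continuousAt_maximizer hψ hη (q := (a • y, a - 1, k)) h) (by fun_prop)

end HopfLax

section InterpolationInverse

variable {E : Type*} [NormedAddCommGroup E] [InnerProductSpace ℝ E] {ψ : E → ℝ} {t : ℝ}

/-- The displacement interpolation at time `t` between the identity and `T`. -/
def displacementMap (T : E → E) (t : ℝ) (x : E) : E :=
  (1 - t) • x + t • T x

theorem displacementMap_mem (hΩ : Convex ℝ Ω) (ht : t ∈ Icc (0 : ℝ) 1) {x : E} (hx : x ∈ Ω)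
    (hTx : T x ∈ Ω) : displacementMap T t x ∈ Ω :=
  hΩ hx hTx (sub_nonneg.2 ht.2) ht.1 (sub_add_cancel 1 t)

/-- The inverse of the displacement interpolation `x ↦ (1 - t) x + t ∇ψ(x)`, defined everywhere for
`0 < t < 1`: the point from which `y` is reached at time `t`. -/
noncomputable def interpolationInverse (ψ : E → ℝ) (t : ℝ) (y : E) : E :=
  hopfLaxPoint ψ 0 t⁻¹ 0 y

/-- The velocity at time `t` and position `y` of the displacement interpolation with potential `ψ`,
for `0 < t < 1`. -/
noncomputable def interpolationVelocity (ψ : E → ℝ) (t : ℝ) (y : E) : E :=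
  t⁻¹ • (y - interpolationInverse ψ t y)

theorem inv_sub_one_pos (ht : t ∈ Ioo (0 : ℝ) 1) : 0 < t⁻¹ - 1 :=
  sub_pos.2 ((one_lt_inv₀ ht.1).2 ht.2)

theorem interpolationInverse_add_smul_interpolationVelocity (ht : t ≠ 0) (y : E) :
    interpolationInverse ψ t y + t • interpolationVelocity ψ t y = y := by
  rw [interpolationVelocity, smul_inv_smul₀ ht, add_sub_cancel]

variable [FiniteDimensional ℝ E]

theorem isSubgradientAt_maximizer (hψ : ConvexOn ℝ univ ψ) {a : ℝ} (ha : 0 < a) (p : E) :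
    IsSubgradientAt ψ (p - a • maximizer ψ 0 (p, a, 0)) (maximizer ψ 0 (p, a, 0)) := by
  intro z
  have hq : (p, a, (0 : ℝ)) ∈ legendreDomain E 0 := by simpa [legendreDomain] using ha
  have hgrowth := add_sq_norm_sub_le_of_strongConvexOn
    (strongConvexOn_sub_pairing hψ IsPerturbation.zero _)
    (maximizer_spec hψ IsPerturbation.zero hq) z
  generalize maximizer ψ 0 (p, a, 0) = S at hgrowth ⊢
  rw [pairing_apply, pairing_apply, norm_sub_sq_real, real_inner_comm S z] at hgrowth
  simp only [abs_zero, zero_mul, sub_zero] at hgrowth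
  rw [inner_sub_left, inner_sub_right, inner_sub_right, real_inner_smul_left,
    real_inner_smul_left, real_inner_self_eq_norm_sq]
  linarith

theorem maximizer_eq_of_isSubgradientAt (hψ : ConvexOn ℝ univ ψ) {a : ℝ} (ha : 0 < a) {x p : E}
    (hp : IsSubgradientAt ψ p x) : maximizer ψ 0 (a • x + p, a, 0) = x := by
  have hq : (a • x + p, a, (0 : ℝ)) ∈ legendreDomain E 0 := by simpa [legendreDomain] using ha
  refine maximizer_eq hψ IsPerturbation.zero hq fun w => ?_
  have hw := hp w
  have hsq : 0 ≤ a * ‖w - x‖ ^ 2 := by positivity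
  rw [norm_sub_sq_real, real_inner_comm] at hsq
  rw [inner_sub_right] at hw
  rw [pairing_apply, pairing_apply, inner_add_left, inner_add_left, real_inner_smul_left,
    real_inner_smul_left, real_inner_self_eq_norm_sq]
  simp only [zero_mul]
  linarith

theorem isSubgradientAt_interpolationInverse (hψ : ConvexOn ℝ univ ψ) (ht : t ∈ Ioo (0 : ℝ) 1)
    (y : E) : IsSubgradientAt ψ (interpolationInverse ψ t y + interpolationVelocity ψ t y)
      (interpolationInverse ψ t y) := by
  have h := isSubgradientAt_maximizer hψ (inv_sub_one_pos ht) (t⁻¹ • y)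
  rw [← hopfLaxPoint, ← interpolationInverse] at h
  convert h using 1
  rw [interpolationVelocity]
  module

theorem interpolationInverse_add_interpolationVelocity (hψ : ConvexOn ℝ univ ψ)
    (ht : t ∈ Ioo (0 : ℝ) 1) {y p : E} (hp : HasGradientAt ψ p (interpolationInverse ψ t y)) :
    interpolationInverse ψ t y + interpolationVelocity ψ t y = p :=
  (isSubgradientAt_interpolationInverse hψ ht y).eq_of_hasGradientAt hp

theorem interpolationInverse_displacementMap {T : E → E} (hψ : ConvexOn ℝ univ ψ)
    (ht : t ∈ Ioo (0 : ℝ) 1) {x : E} (hx : HasGradientAt ψ (T x) x) :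
    interpolationInverse ψ t (displacementMap T t x) = x := by
  have hscale : t⁻¹ • displacementMap T t x = (t⁻¹ - 1) • x + T x := by
    have := ht.1.ne'
    rw [displacementMap]
    match_scalars <;> field_simp
  rw [interpolationInverse, hopfLaxPoint, hscale]
  exact maximizer_eq_of_isSubgradientAt hψ (inv_sub_one_pos ht)
    (isSubgradientAt_of_convexOn_of_hasGradientAt hψ hx)

theorem interpolationVelocity_displacementMap {T : E → E} (hψ : ConvexOn ℝ univ ψ)
    (ht : t ∈ Ioo (0 : ℝ) 1) {x : E} (hx : HasGradientAt ψ (T x) x) :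
    interpolationVelocity ψ t (displacementMap T t x) = T x - x := by
  have := ht.1.ne'
  rw [interpolationVelocity, interpolationInverse_displacementMap hψ ht hx, displacementMap]
  match_scalars <;> field_simp
  ring

theorem displacementMap_interpolationInverse {T : E → E} (hψ : ConvexOn ℝ univ ψ)
    (ht : t ∈ Ioo (0 : ℝ) 1) {y : E} (hy : HasGradientAt ψ (T (interpolationInverse ψ t y))
      (interpolationInverse ψ t y)) : displacementMap T t (interpolationInverse ψ t y) = y := by
  rw [displacementMap, ← interpolationInverse_add_interpolationVelocity hψ ht hy]
  nth_rw 4 [← interpolationInverse_add_smul_interpolationVelocity (ψ := ψ) ht.1.ne' y]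
  module

theorem hasGradientAt_interpolationInverse (hψ : ConvexOn ℝ univ ψ) (ht : t ∈ Ioo (0 : ℝ) 1)
    (y : E) : HasGradientAt (fun y => 2⁻¹ * ‖y‖ ^ 2 - t * hopfLax ψ 0 t⁻¹ 0 y)
      (interpolationInverse ψ t y) y := by
  have hlt : |(0 : ℝ)| * 0 < t⁻¹ - 1 := by simpa using inv_sub_one_pos ht
  have hsq : HasFDerivAt (fun y : E => 2⁻¹ * ‖y‖ ^ 2) ((2 : ℝ)⁻¹ • (2 • innerSL ℝ y)) y :=
    (hasStrictFDerivAt_norm_sq y).hasFDerivAt.const_mul 2⁻¹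
  have hpot := (hasGradientAt_hopfLax hψ IsPerturbation.zero hlt y).hasFDerivAt.const_mul t
  rw [hasGradientAt_iff_hasFDerivAt]
  refine (hsq.sub hpot).congr_fderiv ?_
  ext v
  simp [interpolationInverse, ht.1.ne']

theorem continuousOn_interpolationInverse (hψ : ConvexOn ℝ univ ψ) :
    ContinuousOn (fun z : E × ℝ => interpolationInverse ψ z.2 z.1) (univ ×ˢ Ioo 0 1) := by
  intro z hz
  have hparam : ContinuousAt (fun z : E × ℝ => (z.2⁻¹, (0 : ℝ), z.1)) z :=
    (continuousAt_snd.inv₀ hz.2.1.ne').prodMk (continuousAt_const.prodMk continuousAt_fst)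
  have hpoint := continuousAt_hopfLaxPoint hψ .zero (a := z.2⁻¹) (k := 0)
    (by simpa using inv_sub_one_pos hz.2) z.1
  exact (hpoint.comp_of_eq hparam rfl).continuousWithinAt

end InterpolationInverse

section DensityBound

variable {E : Type*} [NormedAddCommGroup E] [InnerProductSpace ℝ E] {t : ℝ}

theorem inner_fderiv_symm_of_hasGradientAt [CompleteSpace E] {H : E → ℝ} {S : E → E} {y : E}
    (hH : ∀ y, HasGradientAt H (S y) y) (hS : DifferentiableAt ℝ S y) :
    (fderiv ℝ S y).toLinearMap.IsSymmetric := fun v w => by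
  have hsecond : HasFDerivAt (fun y => innerSL ℝ (S y)) ((innerSL ℝ).comp (fderiv ℝ S y)) y :=
    (innerSL ℝ).hasFDerivAt.comp y hS.hasFDerivAt
  exact (second_derivative_symmetric (fun y => (hH y).hasFDerivAt) hsecond v w).trans
    (real_inner_comm _ _)

theorem inner_fderiv_nonneg {S T : E → E} {S' T' : E →L[ℝ] E} {y : E}
    (hmono : ∀ y y', 0 ≤ ⟪S y - S y', T y - T y'⟫) (hS : HasFDerivAt S S' y)
    (hT : HasFDerivAt T T' y) (v : E) : 0 ≤ ⟪S' v, T' v⟫ := by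
  refine ge_of_tendsto ((hS.hasLineDerivAt v).tendsto_slope_zero.inner (𝕜 := ℝ)
    (hT.hasLineDerivAt v).tendsto_slope_zero) (Filter.Eventually.of_forall fun r => ?_)
  rw [real_inner_smul_left, inner_smul_right, ← mul_assoc]
  exact mul_nonneg (mul_self_nonneg _) (hmono _ _)

theorem prod_le_one_or_prod_le_one_of_weighted_sum_eq_one {ι : Type*} [Fintype ι]
    (ht : t ∈ Ioo (0 : ℝ) 1) {a b : ι → ℝ} (ha : ∀ i, 0 ≤ a i) (hb : ∀ i, 0 ≤ b i)
    (hab : ∀ i, (1 - t) * a i + t * b i = 1) : ∏ i, a i ≤ 1 ∨ ∏ i, b i ≤ 1 := by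
  have ht' : 0 < 1 - t := sub_pos.2 ht.2
  have hgeom : (∏ i, a i) ^ (1 - t) * (∏ i, b i) ^ t ≤ 1 := by
    rw [← Real.finsetProd_rpow _ _ fun i _ => ha i, ← Real.finsetProd_rpow _ _ fun i _ => hb i,
      ← Finset.prod_mul_distrib]
    refine Finset.prod_le_one (fun i _ => mul_nonneg (Real.rpow_nonneg (ha i) _)
      (Real.rpow_nonneg (hb i) _)) fun i _ => ?_
    exact (Real.geom_mean_le_arith_mean2_weighted ht'.le ht.1.le (ha i) (hb i)
      (sub_add_cancel 1 t)).trans_eq (hab i)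
  by_contra! h
  exact hgeom.not_gt (one_lt_mul_of_lt_of_le (Real.one_lt_rpow h.1 ht')
    (Real.one_lt_rpow h.2 ht.1).le)

theorem nonneg_of_mul_nonneg_of_weighted_sum_eq_one (ht : t ∈ Ioo (0 : ℝ) 1) {a b : ℝ}
    (hmul : 0 ≤ a * b) (hsum : (1 - t) * a + t * b = 1) : 0 ≤ a ∧ 0 ≤ b := by
  have ht' : 0 < 1 - t := sub_pos.2 ht.2
  rcases mul_nonneg_iff.1 hmul with h | ⟨ha, hb⟩
  · exact h
  · linarith [mul_nonpos_of_nonneg_of_nonpos ht'.le ha,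
      mul_nonpos_of_nonneg_of_nonpos ht.1.le hb]

theorem det_eq_prod_of_forall_apply_basis_eq_smul {ι R M : Type*} [CommRing R] [AddCommGroup M]
    [Module R M] [Fintype ι] (b : Module.Basis ι R M) {f : M →ₗ[R] M} {β : ι → R}
    (h : ∀ i, f (b i) = β i • b i) : LinearMap.det f = ∏ i, β i := by
  classical
  have hf : f = Matrix.toLin b b (Matrix.diagonal β) := b.ext fun i => by
    simp [h, Matrix.toLin_self, Matrix.diagonal_apply, ite_smul]
  rw [hf, LinearMap.det_toLin, Matrix.det_diagonal]

theorem exists_lipschitzWith_of_inner_sub_nonneg {S T : E → E} (ht : t ∈ Ioo (0 : ℝ) 1)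
    (hmono : ∀ y y', 0 ≤ ⟪S y - S y', T y - T y'⟫)
    (hsum : ∀ y, (1 - t) • S y + t • T y = y) : ∃ K, LipschitzWith K S := by
  have ht' : 0 < 1 - t := sub_pos.2 ht.2
  refine ⟨_, LipschitzWith.of_dist_le_mul (K := ((1 - t)⁻¹).toNNReal) fun y y' => ?_⟩
  have hinner : (1 - t) * ‖S y - S y'‖ ^ 2 ≤ ‖S y - S y'‖ * ‖y - y'‖ := by
    refine le_trans ?_ (real_inner_le_norm _ _)
    have hdiff : y - y' = (1 - t) • (S y - S y') + t • (T y - T y') := by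
      conv_lhs => rw [← hsum y, ← hsum y']
      module
    rw [hdiff, inner_add_right, inner_smul_right, inner_smul_right, real_inner_self_eq_norm_sq]
    exact le_add_of_nonneg_right (mul_nonneg ht.1.le (hmono y y'))
  rw [dist_eq_norm, dist_eq_norm, Real.coe_toNNReal _ (inv_pos.2 ht').le, inv_mul_eq_div,
    le_div_iff₀ ht']
  rcases (norm_nonneg (S y - S y')).eq_or_lt with h | h
  · rw [← h, zero_mul]
    exact norm_nonneg _
  · exact le_of_mul_le_mul_left (by linarith) h

variable [FiniteDimensional ℝ E]

theorem abs_det_le_one_or_abs_det_le_one (ht : t ∈ Ioo (0 : ℝ) 1) {A B : E →ₗ[ℝ] E}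
    (hA : A.IsSymmetric) (hmono : ∀ v, 0 ≤ ⟪A v, B v⟫)
    (hAB : ∀ v, (1 - t) • A v + t • B v = v) :
    |LinearMap.det A| ≤ 1 ∨ |LinearMap.det B| ≤ 1 := by
  set b := hA.eigenvectorBasis rfl
  set a := hA.eigenvalues rfl
  set β := fun i => t⁻¹ * (1 - (1 - t) * a i)
  have hAb : ∀ i, A (b i) = a i • b i := fun i => hA.apply_eigenvectorBasis rfl i
  have hBb : ∀ i, B (b i) = β i • b i := fun i => by
    have h := hAB (b i)
    rw [hAb, ← eq_sub_iff_add_eq', ← eq_inv_smul_iff₀ ht.1.ne'] at h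
    rw [h]
    module
  have hsum : ∀ i, (1 - t) * a i + t * β i = 1 := fun i => by
    rw [mul_inv_cancel_left₀ ht.1.ne', add_sub_cancel]
  have hnonneg : ∀ i, 0 ≤ a i ∧ 0 ≤ β i := fun i => by
    refine nonneg_of_mul_nonneg_of_weighted_sum_eq_one ht ?_ (hsum i)
    simpa [hAb, hBb, real_inner_smul_left, inner_smul_right, real_inner_self_eq_norm_sq,
      b.orthonormal.1 i, mul_comm] using hmono (b i)
  rw [det_eq_prod_of_forall_apply_basis_eq_smul b.toBasis (by simpa using hAb),
    det_eq_prod_of_forall_apply_basis_eq_smul b.toBasis (by simpa using hBb),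
    abs_of_nonneg (Finset.prod_nonneg fun i _ => (hnonneg i).1),
    abs_of_nonneg (Finset.prod_nonneg fun i _ => (hnonneg i).2)]
  exact prod_le_one_or_prod_le_one_of_weighted_sum_eq_one ht (fun i => (hnonneg i).1)
    (fun i => (hnonneg i).2) hsum

variable [MeasurableSpace E] [BorelSpace E] (μ : Measure E) [μ.IsAddHaarMeasure]

theorem addHaar_image_eq_zero_of_lipschitzWith {S : E → E} {K : NNReal} (hS : LipschitzWith K S)
    {B : Set E} (hB : μ B = 0) : μ (S '' B) = 0 := by
  have hnull := hS.hausdorffMeasure_image_le (d := Module.finrank ℝ E) (Nat.cast_nonneg _) B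
  rw [Measure.absolutelyContinuous_isAddHaarMeasure _ μ hB, mul_zero] at hnull
  exact Measure.absolutelyContinuous_isAddHaarMeasure μ _ (nonpos_iff_eq_zero.1 hnull)

theorem addHaar_image_le_of_abs_det_fderiv_le_one {f : E → E} {f' : E → E →L[ℝ] E} {B : Set E}
    (hB : MeasurableSet B) (hf : ∀ y ∈ B, HasFDerivAt f (f' y) y)
    (hdet : ∀ y ∈ B, |(f' y).det| ≤ 1) : μ (f '' B) ≤ μ B :=
  calc μ (f '' B) ≤ ∫⁻ y in B, ENNReal.ofReal |(f' y).det| ∂μ :=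
        addHaar_image_le_lintegral_abs_det_fderiv μ hB fun y hy => (hf y hy).hasFDerivWithinAt
    _ ≤ ∫⁻ _ in B, 1 ∂μ :=
        setLIntegral_mono' hB fun y hy => ENNReal.ofReal_le_one.2 (hdet y hy)
    _ = μ B := setLIntegral_one B

-- Where `S` is differentiable, `S` or `T` does not expand volume, since `det S'` and `det T'`
-- have weighted geometric mean at most one.
theorem le_addHaar_of_le_addHaar_image {S T : E → E} {H : E → ℝ} (ht : t ∈ Ioo (0 : ℝ) 1)
    (hH : ∀ y, HasGradientAt H (S y) y) (hmono : ∀ y y', 0 ≤ ⟪S y - S y', T y - T y'⟫)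
    (hsum : ∀ y, (1 - t) • S y + t • T y = y) {ν : Measure E}
    (hνS : ∀ B, MeasurableSet B → ν B ≤ μ (S '' B))
    (hνT : ∀ B, MeasurableSet B → ν B ≤ μ (T '' B)) : ν ≤ μ := by
  obtain ⟨K, hlip⟩ := exists_lipschitzWith_of_inner_sub_nonneg ht hmono hsum
  obtain rfl : T = fun y => t⁻¹ • (y - (1 - t) • S y) := funext fun y => by
    rw [eq_inv_smul_iff₀ ht.1.ne', eq_sub_iff_add_eq', hsum]
  set D := {y | DifferentiableAt ℝ S y}
  set P := {y | |(fderiv ℝ S y).det| ≤ 1}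
  have hD : MeasurableSet D := measurableSet_of_differentiableAt ℝ S
  have hP : MeasurableSet P := measurableSet_le
    (ContinuousLinearMap.continuous_det.measurable.comp (measurable_fderiv ℝ S)).abs
    measurable_const
  have hS' : ∀ y ∈ D, HasFDerivAt S (fderiv ℝ S y) y := fun y hy => hy.hasFDerivAt
  have hT' : ∀ y ∈ D, HasFDerivAt (fun y => t⁻¹ • (y - (1 - t) • S y))
      (t⁻¹ • (ContinuousLinearMap.id ℝ E - (1 - t) • fderiv ℝ S y)) y := fun y hy =>
    ((hasFDerivAt_id y).sub ((hS' y hy).const_smul (1 - t))).const_smul t⁻¹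
  have hdet : ∀ y ∈ D, y ∉ P →
      |(t⁻¹ • (ContinuousLinearMap.id ℝ E - (1 - t) • fderiv ℝ S y)).det| ≤ 1 := fun y hy hyP =>
    (abs_det_le_one_or_abs_det_le_one ht (inner_fderiv_symm_of_hasGradientAt hH hy)
      (inner_fderiv_nonneg hmono (hS' y hy) (hT' y hy)) fun v => by
        simp [smul_inv_smul₀ ht.1.ne']).resolve_left hyP
  refine Measure.le_iff.2 fun B hB => ?_
  have hnull : ν (B \ D) = 0 := le_zero_iff.1 <| (hνS _ (hB.diff hD)).trans_eq <|
    addHaar_image_eq_zero_of_lipschitzWith μ hlip <|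
      measure_mono_null (fun y hy => hy.2) (ae_iff.1 (hlip.ae_differentiableAt (μ := μ)))
  rw [← measure_inter_add_sdiff B hD, hnull, add_zero, ← measure_inter_add_sdiff (B ∩ D) hP]
  refine le_trans (add_le_add ?_ ?_)
    ((measure_inter_add_sdiff (μ := μ) (B ∩ D) hP).trans_le (measure_mono inter_subset_left))
  · exact (hνS _ ((hB.inter hD).inter hP)).trans (addHaar_image_le_of_abs_det_fderiv_le_one μ
      ((hB.inter hD).inter hP) (fun y hy => hS' y hy.1.2) fun y hy => hy.2)
  · exact (hνT _ ((hB.inter hD).diff hP)).trans (addHaar_image_le_of_abs_det_fderiv_le_one μ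
      ((hB.inter hD).diff hP) (fun y hy => hT' y hy.1.2) fun y hy => hdet y hy.1.2 hy.2)

end DensityBound

section BrenierMap

theorem integrable_of_continuous_of_ae_mem_isCompact {X F : Type*} [TopologicalSpace X] [T2Space X]
    [MeasurableSpace X] [OpensMeasurableSpace X] [NormedAddCommGroup F] {μ : Measure X}
    [IsFiniteMeasure μ] {K : Set X} (hK : IsCompact K) (hμ : ∀ᵐ x ∂μ, x ∈ K) {f : X → F}
    (hf : Continuous f) : Integrable f μ := by
  rw [← Measure.restrict_eq_self_of_ae_mem hμ]
  exact hf.continuousOn.integrableOn_compact hK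

variable {E : Type*} [NormedAddCommGroup E] [InnerProductSpace ℝ E] [MeasurableSpace E]
  [CompleteSpace E] {ψ : E → ℝ} {T : E → E} {μ ν : Measure E} {K : Set E}

/-- `T` is a Brenier map with convex potential `ψ` from `μ` to `ν`, both carried by the compact
set `K`. -/
structure IsBrenierMap (K : Set E) (ψ : E → ℝ) (T : E → E) (μ ν : Measure E) : Prop where
  isCompact : IsCompact K
  convexOn : ConvexOn ℝ univ ψ
  measurable : Measurable T
  ae_hasGradientAt : ∀ᵐ x ∂μ, HasGradientAt ψ (T x) x
  map_eq : μ.map T = ν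
  ae_mem_left : ∀ᵐ x ∂μ, x ∈ K
  ae_mem_right : ∀ᵐ y ∂ν, y ∈ K

/-- The quadratic cost of transporting `μ` along `T`. -/
noncomputable def transportCost (μ : Measure E) (T : E → E) : ℝ :=
  ∫ x, ‖T x - x‖ ^ 2 ∂μ

namespace IsBrenierMap

variable (h : IsBrenierMap K ψ T μ ν)
include h

theorem ae_apply_mem : ∀ᵐ x ∂μ, T x ∈ K :=
  ae_of_ae_map h.measurable.aemeasurable (h.map_eq ▸ h.ae_mem_right)

theorem ae_isSubgradientAt : ∀ᵐ x ∂μ, IsSubgradientAt ψ (T x) x :=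
  h.ae_hasGradientAt.mono fun _ => isSubgradientAt_of_convexOn_of_hasGradientAt h.convexOn

variable [FiniteDimensional ℝ E]

theorem continuous_sub_half_norm_sq : Continuous fun x => ψ x - ‖x‖ ^ 2 / 2 := by
  have := continuousOn_univ.1 (h.convexOn.continuousOn isOpen_univ)
  fun_prop

variable [BorelSpace E] [IsFiniteMeasure μ]

theorem integrable_comp {F : Type*} [NormedAddCommGroup F] {f : E × E → F} (hf : Continuous f) :
    Integrable (fun x => f (x, T x)) μ := by
  have hgraph : Measurable fun x => (x, T x) := measurable_id.prodMk h.measurable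
  refine (integrable_map_measure hf.aestronglyMeasurable hgraph.aemeasurable).1
    (integrable_of_continuous_of_ae_mem_isCompact (h.isCompact.prod h.isCompact) ?_ hf)
  refine (ae_map_iff hgraph.aemeasurable
    (h.isCompact.prod h.isCompact).isClosed.measurableSet).2 ?_
  filter_upwards [h.ae_mem_left, h.ae_apply_mem] with x hx hTx using ⟨hx, hTx⟩

theorem half_transportCost_le {C : ℝ} {η : E → ℝ} (hη : IsPerturbation C η) {a : ℝ} (ha : 1 < a) :
    transportCost μ T / 2 ≤
      ∫ y, hopfLax ψ η a 0 y ∂ν - ∫ x, (ψ x - ‖x‖ ^ 2 / 2) ∂μ := by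
  have hφ := continuous_hopfLax h.convexOn hη (a := a) (k := 0) (by simpa using ha)
  have hφT : Integrable (fun x => hopfLax ψ η a 0 (T x)) μ :=
    h.integrable_comp (hφ.comp continuous_snd)
  have hψ : Integrable (fun x => ψ x - ‖x‖ ^ 2 / 2) μ :=
    h.integrable_comp (h.continuous_sub_half_norm_sq.comp continuous_fst)
  rw [← h.map_eq, integral_map h.measurable.aemeasurable hφ.aestronglyMeasurable,
    ← integral_sub hφT hψ, transportCost, ← integral_div]
  refine integral_mono_ae ((h.integrable_comp (f := fun q => ‖q.2 - q.1‖ ^ 2)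
    (by fun_prop)).div_const 2) (hφT.sub hψ) ?_
  filter_upwards [h.ae_isSubgradientAt] with x hx
  have := le_hopfLax_of_isSubgradientAt hx η ha.le
  linarith

theorem transportCost_le {π : Measure (E × E)} (hfst : π.map Prod.fst = μ)
    (hsnd : π.map Prod.snd = ν) : transportCost μ T ≤ ∫ q, ‖q.1 - q.2‖ ^ 2 ∂π := by
  have hπ : IsFiniteMeasure π :=
    (Measure.isFiniteMeasure_map_iff measurable_fst.aemeasurable).1 (hfst ▸ inferInstance)
  have hmem : ∀ᵐ q ∂π, q ∈ K ×ˢ K := by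
    filter_upwards [ae_of_ae_map measurable_fst.aemeasurable (hfst ▸ h.ae_mem_left),
      ae_of_ae_map measurable_snd.aemeasurable (hsnd ▸ h.ae_mem_right)] with q h1 h2 using ⟨h1, h2⟩
  have hintegrable {f : E × E → ℝ} (hf : Continuous f) : Integrable f π :=
    integrable_of_continuous_of_ae_mem_isCompact (h.isCompact.prod h.isCompact) hmem hf
  have hψ := h.continuous_sub_half_norm_sq
  have hψπ : Integrable (fun q : E × E => ψ q.1 - ‖q.1‖ ^ 2 / 2) π :=
    hintegrable (hψ.comp continuous_fst)
  have hdual : ∀ a : ℝ, 1 < a → transportCost μ T ≤ a * ∫ q, ‖q.1 - q.2‖ ^ 2 ∂π := by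
    intro a ha
    have hφ := continuous_hopfLax h.convexOn .zero (a := a) (k := 0) (by simpa using ha)
    have hφπ : Integrable (fun q : E × E => hopfLax ψ 0 a 0 q.2) π :=
      hintegrable (hφ.comp continuous_snd)
    have hhalf := h.half_transportCost_le .zero ha
    rw [← hfst, ← hsnd, integral_map measurable_fst.aemeasurable hψ.aestronglyMeasurable,
      integral_map measurable_snd.aemeasurable hφ.aestronglyMeasurable,
      ← integral_sub hφπ hψπ, hfst] at hhalf
    have hmono : ∫ q, (hopfLax ψ 0 a 0 q.2 - (ψ q.1 - ‖q.1‖ ^ 2 / 2)) ∂π ≤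
        ∫ q, a / 2 * ‖q.1 - q.2‖ ^ 2 ∂π := by
      refine integral_mono (hφπ.sub hψπ) (hintegrable (by fun_prop)) fun q => ?_
      have := hopfLax_le h.convexOn .zero (a := a) (k := 0) (by simpa using ha) q.1 q.2
      rw [norm_sub_rev, Pi.zero_apply] at this
      linarith
    rw [integral_const_mul] at hmono
    linarith
  refine ge_of_tendsto (x := nhdsWithin 1 (Ioi 1))
    (f := fun a => a * ∫ q, ‖q.1 - q.2‖ ^ 2 ∂π) ?_ ?_
  · have hcont : Continuous fun a : ℝ => a * ∫ q, ‖q.1 - q.2‖ ^ 2 ∂π := by fun_prop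
    exact (hcont.tendsto' 1 _ (one_mul _)).mono_left nhdsWithin_le_nhds
  · filter_upwards [self_mem_nhdsWithin] with a ha using hdual a ha

end IsBrenierMap

theorem IsBrenierMap.W2sq_eq {d : ℕ} {K : Set (EuclideanSpace ℝ (Fin d))}
    {ψ : EuclideanSpace ℝ (Fin d) → ℝ} {T : EuclideanSpace ℝ (Fin d) → EuclideanSpace ℝ (Fin d)}
    {μ ν : Measure (EuclideanSpace ℝ (Fin d))} [IsFiniteMeasure μ] (h : IsBrenierMap K ψ T μ ν) :
    W2sq μ ν = ENNReal.ofReal (transportCost μ T) := by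
  have hcost : ENNReal.ofReal (transportCost μ T) = ∫⁻ x, ENNReal.ofReal (‖x - T x‖ ^ 2) ∂μ := by
    rw [transportCost, ofReal_integral_eq_lintegral_ofReal
      (h.integrable_comp (f := fun q => ‖q.2 - q.1‖ ^ 2) (by fun_prop))
      (ae_of_all _ fun x => by positivity)]
    simp_rw [norm_sub_rev]
  refine le_antisymm (sInf_le ?_) (le_sInf ?_)
  · have hgraph : Measurable fun x => (x, T x) := measurable_id.prodMk h.measurable
    refine ⟨μ.map fun x => (x, T x), ?_, ?_, ?_⟩
    · rw [Measure.map_map measurable_fst hgraph]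
      exact Measure.map_id
    · rw [Measure.map_map measurable_snd hgraph]
      exact h.map_eq
    · rw [lintegral_map (by fun_prop) hgraph, hcost]
  · rintro _ ⟨π, hfst, hsnd, rfl⟩
    refine (ENNReal.ofReal_le_ofReal (h.transportCost_le hfst hsnd)).trans ?_
    rw [integral_eq_lintegral_of_nonneg_ae (ae_of_all _ fun q => by positivity)
      (by fun_prop)]
    exact ENNReal.ofReal_toReal_le

end BrenierMap

section Flow

theorem exists_contDiff_eventuallyEq_of_contDiffOn {E F : Type*} [NormedAddCommGroup E]
    [NormedSpace ℝ E] [NormedAddCommGroup F] [NormedSpace ℝ F] {s U : Set ℝ} (hs : IsClosed s)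
    (hU : IsOpen U) (hsU : s ⊆ U) {f : E × ℝ → F} (hf : ContDiffOn ℝ 1 f (univ ×ˢ U)) :
    ∃ g : E × ℝ → F, ContDiff ℝ 1 g ∧ ∀ z, z.2 ∈ s → g =ᶠ[nhds z] f := by
  obtain ⟨χ, hχ0, hχ1, -⟩ := exists_contMDiffMap_zero_one_nhds_of_isClosed (n := 1)
    (modelWithCornersSelf ℝ ℝ) hU.isClosed_compl hs (disjoint_compl_left_iff_subset.2 hsU)
  rw [Filter.eventually_iff, mem_nhdsSet_iff_forall] at hχ0 hχ1
  refine ⟨fun z => χ z.2 • f z, contDiff_iff_contDiffAt.2 fun z => ?_, fun z hz => ?_⟩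
  · by_cases hz : z.2 ∈ U
    · exact (χ.contMDiff.contDiff.contDiffAt.comp z contDiffAt_snd).smul
        (hf.contDiffAt ((isOpen_univ.prod hU).mem_nhds ⟨mem_univ _, hz⟩))
    · refine (contDiffAt_const (c := (0 : F))).congr_of_eventuallyEq ?_
      filter_upwards [continuousAt_snd.preimage_mem_nhds (hχ0 z.2 hz)] with w hw
      rw [show χ w.2 = 0 from hw, zero_smul]
  · filter_upwards [continuousAt_snd.preimage_mem_nhds (hχ1 z.2 hz)] with w hw
    rw [show χ w.2 = 1 from hw, one_smul]

variable {E : Type*} [NormedAddCommGroup E] [InnerProductSpace ℝ E]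

/-- The Hamilton–Jacobi expression `∂ₜφ + ‖∇φ‖² / 2` of a function of space and time, with the
spatial gradient represented by its dual linear form. -/
noncomputable def hamiltonJacobi (φ : E × ℝ → ℝ) (z : E × ℝ) : ℝ :=
  fderiv ℝ φ z (0, 1) + ‖(fderiv ℝ φ z).comp (.inl ℝ E ℝ)‖ ^ 2 / 2

theorem apply_prod_one_eq (A : E × ℝ →L[ℝ] ℝ) (w : E) :
    A (w, 1) = A.comp (.inl ℝ E ℝ) w + A (0, 1) := by
  simp [← map_add]

theorem fderiv_apply_zero_one_eq_deriv {φ : E × ℝ → ℝ} {z : E × ℝ} (hφ : DifferentiableAt ℝ φ z) :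
    fderiv ℝ φ z (0, 1) = deriv (fun s => φ (z.1, s)) z.2 :=
  (HasFDerivAt.comp_hasDerivAt z.2 (f := fun s => (z.1, s)) hφ.hasFDerivAt
    ((hasDerivAt_const z.2 z.1).prodMk (hasDerivAt_id z.2))).deriv.symm

theorem fderiv_comp_inl_eq_fderiv {φ : E × ℝ → ℝ} {z : E × ℝ} (hφ : DifferentiableAt ℝ φ z) :
    (fderiv ℝ φ z).comp (.inl ℝ E ℝ) = fderiv ℝ (fun y => φ (y, z.2)) z.1 :=
  (HasFDerivAt.comp z.1 (f := fun y => (y, z.2)) hφ.hasFDerivAt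
    (hasFDerivAt_prodMk_left z.1 z.2)).fderiv.symm

theorem fderiv_apply_le_hamiltonJacobi (φ : E × ℝ → ℝ) (z : E × ℝ) (w : E) :
    fderiv ℝ φ z (w, 1) ≤ hamiltonJacobi φ z + ‖w‖ ^ 2 / 2 := by
  rw [apply_prod_one_eq, hamiltonJacobi]
  generalize (fderiv ℝ φ z).comp (.inl ℝ E ℝ) = A
  nlinarith [(le_abs_self _).trans (A.le_opNorm w), sq_nonneg (‖A‖ - ‖w‖)]

variable [MeasurableSpace E]

theorem integrable_fderiv_apply [BorelSpace E] [FiniteDimensional ℝ E]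
    {m : Measure (E × ℝ)} [IsFiniteMeasure m] {v : E × ℝ → E} {S : Set (E × ℝ)}
    (hS : IsCompact S) (hm : ∀ᵐ z ∂m, z ∈ S) (hv : MemLp v 2 m)
    {φ : E × ℝ → ℝ} (hφ : ContDiff ℝ 1 φ) : Integrable (fun z => fderiv ℝ φ z (v z, 1)) m := by
  have hcont : Continuous (fderiv ℝ φ) := hφ.continuous_fderiv one_ne_zero
  have hspace : Continuous fun z => ‖(fderiv ℝ φ z).comp (.inl ℝ E ℝ)‖ ^ 2 / 2 :=
    ((hcont.clm_comp continuous_const).norm.pow 2).div_const 2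
  have htime : Continuous fun z => |fderiv ℝ φ z (0, 1)| := (hcont.clm_apply continuous_const).abs
  have hspeed : Integrable (fun z => ‖v z‖ ^ 2 / 2) m := hv.norm.integrable_sq.div_const 2
  have happly : Continuous fun q : (E × ℝ →L[ℝ] ℝ) × (E × ℝ) => q.1 q.2 :=
    isBoundedBilinearMap_apply.continuous
  refine (((integrable_of_continuous_of_ae_mem_isCompact hS hm hspace).add hspeed).add
    (integrable_of_continuous_of_ae_mem_isCompact hS hm htime)).mono'
    (happly.comp_aestronglyMeasurable
      (hcont.aestronglyMeasurable.prodMk (hv.1.prodMk aestronglyMeasurable_const)))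
    (ae_of_all _ fun z => ?_)
  rw [apply_prod_one_eq, Real.norm_eq_abs]
  refine (abs_add_le _ _).trans ?_
  simp only [Pi.add_apply]
  gcongr
  nlinarith [((fderiv ℝ φ z).comp (.inl ℝ E ℝ)).le_opNorm (v z), Real.norm_eq_abs
    ((fderiv ℝ φ z).comp (.inl ℝ E ℝ) (v z)),
    sq_nonneg (‖(fderiv ℝ φ z).comp (.inl ℝ E ℝ)‖ - ‖v z‖)]

/-- A flow of mass from `μ` to `ν` inside `K` during the time interval `(0, 1)`: `m` is the mass
density in space-time and `v` its velocity, of finite kinetic energy. The continuity equation is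
tested with functions that need not vanish on the boundary of `K`, which encodes the no-flux
condition. -/
structure IsFlow (K : Set E) (μ ν : Measure E) (m : Measure (E × ℝ)) (v : E × ℝ → E) : Prop where
  ae_mem : ∀ᵐ z ∂m, z ∈ K ×ˢ Ioo (0 : ℝ) 1
  memLp : MemLp v 2 m
  continuityEquation : ∀ φ : E × ℝ → ℝ, ContDiff ℝ 1 φ →
    ∫ z, fderiv ℝ φ z (v z, 1) ∂m = ∫ y, φ (y, 1) ∂ν - ∫ x, φ (x, 0) ∂μ

namespace IsFlow

variable {K : Set E} {μ ν : Measure E} {m : Measure (E × ℝ)} {v : E × ℝ → E}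

theorem ae_mem_Icc (h : IsFlow K μ ν m v) : ∀ᵐ z ∂m, z ∈ K ×ˢ Icc (0 : ℝ) 1 :=
  h.ae_mem.mono fun _ hz => ⟨hz.1, Ioo_subset_Icc_self hz.2⟩

variable [BorelSpace E] [IsFiniteMeasure m]

theorem integrable_of_continuous (h : IsFlow K μ ν m v) (hK : IsCompact K) {F : Type*}
    [NormedAddCommGroup F] {f : E × ℝ → F} (hf : Continuous f) : Integrable f m :=
  integrable_of_continuous_of_ae_mem_isCompact (hK.prod isCompact_Icc) h.ae_mem_Icc hf

variable [FiniteDimensional ℝ E]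

theorem duality (h : IsFlow K μ ν m v) (hK : IsCompact K) {φ : E × ℝ → ℝ} {U : Set ℝ}
    (hU : IsOpen U) (hIU : Icc 0 1 ⊆ U) (hφ : ContDiffOn ℝ 1 φ (univ ×ˢ U)) :
    ∫ y, φ (y, 1) ∂ν - ∫ x, φ (x, 0) ∂μ ≤
      ∫ z, hamiltonJacobi φ z ∂m + (∫ z, ‖v z‖ ^ 2 ∂m) / 2 := by
  obtain ⟨g, hg, hgφ⟩ := exists_contDiff_eventuallyEq_of_contDiffOn isClosed_Icc hU hIU hφ
  have hends {s : ℝ} (hs : s ∈ Icc (0 : ℝ) 1) (x : E) : φ (x, s) = g (x, s) :=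
    (hgφ (x, s) hs).self_of_nhds.symm
  have hHJ : ∀ᵐ z ∂m, hamiltonJacobi φ z = hamiltonJacobi g z := by
    filter_upwards [h.ae_mem] with z hz
    rw [hamiltonJacobi, hamiltonJacobi, (hgφ z (Ioo_subset_Icc_self hz.2)).fderiv_eq]
  have hcont : Continuous (fderiv ℝ g) := hg.continuous_fderiv one_ne_zero
  have hintegrable : Integrable (hamiltonJacobi g) m := h.integrable_of_continuous hK
    ((hcont.clm_apply continuous_const).add
      (((hcont.clm_comp continuous_const).norm.pow 2).div_const 2))
  have henergy : Integrable (fun z => ‖v z‖ ^ 2 / 2) m := h.memLp.norm.integrable_sq.div_const 2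
  simp_rw [hends (right_mem_Icc.2 zero_le_one), hends (left_mem_Icc.2 zero_le_one)]
  rw [integral_congr_ae hHJ, ← integral_div, ← integral_add hintegrable henergy,
    ← h.continuityEquation g hg]
  exact integral_mono
    (integrable_fderiv_apply (hK.prod isCompact_Icc) h.ae_mem_Icc h.memLp hg)
    (hintegrable.add henergy) fun z => fderiv_apply_le_hamiltonJacobi g z (v z)

end IsFlow

end Flow

section TestPotential

variable {E : Type*} [NormedAddCommGroup E] [InnerProductSpace ℝ E] {ψ η : E → ℝ} {C ε : ℝ}
  {k : ℝ → ℝ}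

/-- The affine time change mapping `[0, 1]` onto `[ε, 1 - ε]`. -/
def timeChange (ε t : ℝ) : ℝ :=
  ε + (1 - 2 * ε) * t

/-- The Hopf–Lax potential along `timeChange ε`, which keeps `[0, 1]` away from the singular times
`0` and `1` of the potential; the factor `1 - 2ε` restores the Hamilton–Jacobi equation. -/
noncomputable def testPotential (ψ η : E → ℝ) (ε : ℝ) (k : ℝ → ℝ) (z : E × ℝ) : ℝ :=
  (1 - 2 * ε) * hopfLax ψ η (timeChange ε z.2)⁻¹ (k z.2) z.1

/-- The times at which `testPotential` is differentiable. -/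
def testTimes (C ε : ℝ) (k : ℝ → ℝ) : Set ℝ :=
  {t | 0 < timeChange ε t ∧ |k t| * C * timeChange ε t < 1 - timeChange ε t}

theorem hasDerivAt_timeChange (ε t : ℝ) : HasDerivAt (timeChange ε) (1 - 2 * ε) t :=
  (((hasDerivAt_id t).const_mul (1 - 2 * ε)).const_add ε).congr_deriv (mul_one _)

theorem contDiff_timeChange (ε : ℝ) : ContDiff ℝ 1 (timeChange ε) :=
  contDiff_const.add (contDiff_const.mul contDiff_id)

theorem isOpen_testTimes (hk : Continuous k) : IsOpen (testTimes C ε k) := by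
  have hτ := (contDiff_timeChange ε).continuous
  exact (isOpen_lt continuous_const hτ).inter
    (isOpen_lt ((hk.abs.mul_const C).mul hτ) (continuous_const.sub hτ))

theorem Icc_subset_testTimes {B : ℝ} (hε : ε ∈ Ioo (0 : ℝ) (1 / 2)) (hC : 0 ≤ C)
    (hBC : B * C ≤ 1 - 2 * ε) (hk : ∀ t ∈ Icc (0 : ℝ) 1, |k t| ≤ B * (1 - t)) :
    Icc 0 1 ⊆ testTimes C ε k := by
  intro t ht
  have hpos : 0 < 1 - 2 * ε := by linarith [hε.2]
  have ht' : 0 ≤ 1 - t := sub_nonneg.2 ht.2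
  have hτ0 : 0 < timeChange ε t := add_pos_of_pos_of_nonneg hε.1 (mul_nonneg hpos.le ht.1)
  have hτ1 : 1 - timeChange ε t = ε + (1 - 2 * ε) * (1 - t) := by
    rw [timeChange]
    ring
  have hτ_le : timeChange ε t ≤ 1 := by nlinarith [hε.1]
  refine ⟨hτ0, ?_⟩
  calc |k t| * C * timeChange ε t ≤ |k t| * C :=
        mul_le_of_le_one_right (mul_nonneg (abs_nonneg _) hC) hτ_le
    _ ≤ B * (1 - t) * C := by gcongr; exact hk t ht
    _ ≤ (1 - 2 * ε) * (1 - t) := by nlinarith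
    _ < 1 - timeChange ε t := by linarith [hε.1]

theorem lt_inv_sub_one_of_mem_testTimes {t : ℝ} (ht : t ∈ testTimes C ε k) :
    |k t| * C < (timeChange ε t)⁻¹ - 1 := by
  rw [lt_sub_iff_add_lt, ← mul_lt_mul_iff_left₀ ht.1, inv_mul_cancel₀ ht.1.ne']
  linarith [ht.2]

variable [FiniteDimensional ℝ E]

theorem contDiffOn_testPotential (hψ : ConvexOn ℝ univ ψ) (hη : IsPerturbation C η)
    (hk : ContDiff ℝ 1 k) : ContDiffOn ℝ 1 (testPotential ψ η ε k) (univ ×ˢ testTimes C ε k) := by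
  refine contDiffOn_const.mul (contDiffOn_hopfLax hψ hη
    (fun t ht => lt_inv_sub_one_of_mem_testTimes ht) ?_ hk.contDiffOn)
  exact (contDiff_timeChange ε).contDiffOn.inv fun t ht => ht.1.ne'

theorem hamiltonJacobi_testPotential (hψ : ConvexOn ℝ univ ψ) (hη : IsPerturbation C η)
    (hk : ContDiff ℝ 1 k) {z : E × ℝ} (hz : z.2 ∈ testTimes C ε k) :
    hamiltonJacobi (testPotential ψ η ε k) z = (1 - 2 * ε) *
      (deriv k z.2 * η (hopfLaxPoint ψ η (timeChange ε z.2)⁻¹ (k z.2) z.1)) := by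
  have hlt := lt_inv_sub_one_of_mem_testTimes hz
  have hdiff : DifferentiableAt ℝ (testPotential ψ η ε k) z :=
    ((contDiffOn_testPotential hψ hη hk).differentiableOn one_ne_zero).differentiableAt
      ((isOpen_univ.prod (isOpen_testTimes hk.continuous)).mem_nhds ⟨mem_univ _, hz⟩)
  have hα : HasDerivAt (fun t => (timeChange ε t)⁻¹) (-(1 - 2 * ε) / timeChange ε z.2 ^ 2) z.2 :=
    (hasDerivAt_timeChange ε z.2).inv hz.1.ne'
  have htime := (hasDerivAt_hopfLax hψ hη hlt hα
    (hk.differentiable one_ne_zero).differentiableAt.hasDerivAt z.1).const_mul (1 - 2 * ε)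
  have hspace := (hasGradientAt_hopfLax hψ hη hlt z.1).hasFDerivAt.const_mul (1 - 2 * ε)
  rw [hamiltonJacobi, fderiv_apply_zero_one_eq_deriv hdiff, fderiv_comp_inl_eq_fderiv hdiff]
  simp only [testPotential]
  rw [htime.deriv, hspace.fderiv, norm_smul, mul_pow, LinearIsometryEquiv.norm_map, norm_smul,
    mul_pow, Real.norm_eq_abs, Real.norm_eq_abs, sq_abs, sq_abs]
  field_simp
  ring

variable [MeasurableSpace E] [BorelSpace E] {T : E → E} {μ ν : Measure E} [IsFiniteMeasure μ]
  {K : Set E}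

theorem IsBrenierMap.le_integral_testPotential (hB : IsBrenierMap K ψ T μ ν)
    (hη : IsPerturbation C η) (hε : ε ∈ Ioo (0 : ℝ) (1 / 2)) (hk : k 1 = 0)
    (h0 : 0 ∈ testTimes C ε k) :
    (1 - 2 * ε) * (transportCost μ T / 2 - k 0 * ∫ x, η x ∂μ) ≤
      ∫ y, testPotential ψ η ε k (y, 1) ∂ν - ∫ x, testPotential ψ η ε k (x, 0) ∂μ := by
  have hpos : 0 ≤ 1 - 2 * ε := by linarith [hε.2]
  have hlt : |k 0| * C < ε⁻¹ - 1 := by simpa [timeChange] using lt_inv_sub_one_of_mem_testTimes h0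
  have hψ : Integrable (fun x => ψ x - ‖x‖ ^ 2 / 2) μ :=
    hB.integrable_comp (hB.continuous_sub_half_norm_sq.comp continuous_fst)
  have hη' : Integrable (fun x => k 0 * η x) μ :=
    (hB.integrable_comp (hη.continuous.comp continuous_fst)).const_mul _
  have hφ : Integrable (hopfLax ψ η ε⁻¹ (k 0)) μ :=
    hB.integrable_comp ((continuous_hopfLax hB.convexOn hη hlt).comp continuous_fst)
  have hstart : ∫ x, hopfLax ψ η ε⁻¹ (k 0) x ∂μ ≤
      ∫ x, (ψ x - ‖x‖ ^ 2 / 2) ∂μ + k 0 * ∫ x, η x ∂μ := by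
    rw [← integral_const_mul, ← integral_add hψ hη']
    refine integral_mono hφ (hψ.add hη') fun x => ?_
    simpa using hopfLax_le hB.convexOn hη hlt x x
  have hend := hB.half_transportCost_le hη (a := (1 - ε)⁻¹)
    ((one_lt_inv₀ (by linarith [hε.2])).2 (by linarith [hε.1]))
  have hτ : ε + (1 - 2 * ε) = 1 - ε := by ring
  simp only [testPotential, timeChange, integral_const_mul, mul_one, mul_zero, add_zero, hk, hτ]
  rw [← mul_sub]
  exact mul_le_mul_of_nonneg_left (by linarith) hpos

variable {m : Measure (E × ℝ)} [IsFiniteMeasure m] {v : E × ℝ → E}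

theorem IsFlow.le_energy_of_perturbation (h : IsFlow K μ ν m v) (hB : IsBrenierMap K ψ T μ ν)
    (hη : IsPerturbation C η) (hε : ε ∈ Ioo (0 : ℝ) (1 / 2)) (hk : ContDiff ℝ 1 k) (hk1 : k 1 = 0)
    (htimes : Icc 0 1 ⊆ testTimes C ε k) :
    (1 - 2 * ε) * (transportCost μ T / 2 - (k 0 * ∫ x, η x ∂μ + ∫ z, deriv k z.2 *
      η (hopfLaxPoint ψ η (timeChange ε z.2)⁻¹ (k z.2) z.1) ∂m)) ≤ (∫ z, ‖v z‖ ^ 2 ∂m) / 2 := by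
  have hdual := h.duality hB.isCompact (isOpen_testTimes hk.continuous) htimes
    (contDiffOn_testPotential hB.convexOn hη hk)
  have hHJ : ∀ᵐ z ∂m, hamiltonJacobi (testPotential ψ η ε k) z = (1 - 2 * ε) *
      (deriv k z.2 * η (hopfLaxPoint ψ η (timeChange ε z.2)⁻¹ (k z.2) z.1)) :=
    h.ae_mem.mono fun z hz =>
      hamiltonJacobi_testPotential hB.convexOn hη hk (htimes (Ioo_subset_Icc_self hz.2))
  rw [integral_congr_ae hHJ, integral_const_mul] at hdual
  linarith [hB.le_integral_testPotential hη hε hk1 (htimes (left_mem_Icc.2 zero_le_one))]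

theorem IsFlow.transportCost_le (h : IsFlow K μ ν m v) (hB : IsBrenierMap K ψ T μ ν) :
    transportCost μ T ≤ ∫ z, ‖v z‖ ^ 2 ∂m := by
  have hlower : ∀ ε ∈ Ioo (0 : ℝ) (1 / 2),
      (1 - 2 * ε) * transportCost μ T ≤ ∫ z, ‖v z‖ ^ 2 ∂m := by
    intro ε hε
    have htimes : Icc 0 1 ⊆ testTimes 0 ε 0 :=
      Icc_subset_testTimes (B := 0) hε le_rfl (by linarith [hε.2]) (by simp)
    have := h.le_energy_of_perturbation hB .zero hε (k := 0) contDiff_const rfl htimes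
    simp only [Pi.zero_apply, mul_zero, integral_zero, add_zero, sub_zero] at this
    linarith
  refine le_of_tendsto (x := nhdsWithin 0 (Ioi 0))
    (f := fun ε => (1 - 2 * ε) * transportCost μ T) ?_ ?_
  · have hcont : Continuous fun ε : ℝ => (1 - 2 * ε) * transportCost μ T := by fun_prop
    exact (hcont.tendsto' 0 _ (by simp)).mono_left nhdsWithin_le_nhds
  · filter_upwards [Ioo_mem_nhdsGT (show (0 : ℝ) < 1 / 2 by norm_num)] with ε hε using hlower ε hε

end TestPotential

section Uniqueness

theorem ext_of_forall_integral_cos {V : Type*} [NormedAddCommGroup V] [NormedSpace ℝ V]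
    [CompleteSpace V] [SecondCountableTopology V] [MeasurableSpace V] [BorelSpace V]
    {m m' : Measure V} [IsFiniteMeasure m] [IsFiniteMeasure m']
    (h : ∀ (A : StrongDual ℝ V) (b : ℝ), ∫ z, Real.cos (A z + b) ∂m = ∫ z, Real.cos (A z + b) ∂m') :
    m = m' := by
  refine Measure.ext_of_charFunDual (funext fun A => ?_)
  have hexp (n : Measure V) [IsFiniteMeasure n] : charFunDual n A =
      ((∫ z, Real.cos (A z + 0) ∂n : ℝ) : ℂ) +
        ((∫ z, Real.cos (A z + -(Real.pi / 2)) ∂n : ℝ) : ℂ) * Complex.I := by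
    have hcos : Integrable (fun z => ((Real.cos (A z) : ℝ) : ℂ)) n :=
      Integrable.of_bound (by fun_prop) 1 (ae_of_all _ fun z =>
        (Complex.norm_real _).trans_le (Real.abs_cos_le_one (A z)))
    have hsin : Integrable (fun z => ((Real.sin (A z) : ℝ) : ℂ)) n :=
      Integrable.of_bound (by fun_prop) 1 (ae_of_all _ fun z =>
        (Complex.norm_real _).trans_le (Real.abs_sin_le_one (A z)))
    simp only [charFunDual_apply, Complex.exp_mul_I, ← sub_eq_add_neg, Real.cos_sub_pi_div_two,
      add_zero, ← integral_complex_ofReal]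
    rw [← integral_mul_const, ← integral_add hcos (hsin.mul_const _)]
    simp
  rw [hexp m, hexp m', h, h]

variable {E : Type*} [NormedAddCommGroup E] [InnerProductSpace ℝ E] {ψ η : E → ℝ} {C : ℝ}
  {k : ℝ → ℝ}

theorem exists_abs_le_mul_one_sub (hk : ContDiff ℝ 1 k) (hk1 : k 1 = 0) :
    ∃ B, ∀ t ∈ Icc (0 : ℝ) 1, |k t| ≤ B * (1 - t) := by
  obtain ⟨B, hB⟩ := isCompact_Icc.exists_bound_of_continuousOn
    (s := Icc (0 : ℝ) 1) hk.continuous_deriv_one.continuousOn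
  refine ⟨B, fun t ht => ?_⟩
  have := (convex_Icc (0 : ℝ) 1).norm_image_sub_le_of_norm_deriv_le
    (fun s _ => (hk.differentiable one_ne_zero) s) hB ht (right_mem_Icc.2 zero_le_one)
  rwa [hk1, zero_sub, norm_neg, Real.norm_eq_abs, Real.norm_eq_abs,
    abs_of_nonneg (sub_nonneg.2 ht.2)] at this

theorem eventually_Icc_subset_testTimes (hC : 0 ≤ C) (hk : ContDiff ℝ 1 k) (hk1 : k 1 = 0) :
    ∀ᶠ s in nhdsWithin (0 : ℝ) (Ioi 0),
      s ^ 2 ∈ Ioo (0 : ℝ) (1 / 2) ∧ Icc 0 1 ⊆ testTimes C (s ^ 2) fun t => s * k t := by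
  obtain ⟨B, hB⟩ := exists_abs_le_mul_one_sub hk hk1
  have hsmall : ∀ᶠ s in nhdsWithin (0 : ℝ) (Ioi 0), s * B * C + 2 * s ^ 2 < 1 := by
    have hcont : Continuous fun s : ℝ => s * B * C + 2 * s ^ 2 := by fun_prop
    exact ((hcont.tendsto' 0 0 (by simp)).mono_left nhdsWithin_le_nhds).eventually_lt_const one_pos
  filter_upwards [hsmall, Ioo_mem_nhdsGT (show (0 : ℝ) < 1 / 2 by norm_num)] with s hs hs'
  have hε : s ^ 2 ∈ Ioo (0 : ℝ) (1 / 2) := ⟨pow_pos hs'.1 2, by nlinarith [hs'.1, hs'.2]⟩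
  refine ⟨hε, Icc_subset_testTimes (B := s * B) hε hC (by linarith) fun t ht => ?_⟩
  rw [abs_mul, abs_of_pos hs'.1, mul_assoc]
  exact mul_le_mul_of_nonneg_left (hB t ht) hs'.1.le

theorem ext_prod_of_forall_integral_mul_cos [CompleteSpace E] [SecondCountableTopology E]
    [MeasurableSpace E] [BorelSpace E] {m m' : Measure (E × ℝ)} [IsFiniteMeasure m]
    [IsFiniteMeasure m']
    (h : ∀ (g : ℝ → ℝ) (ξ : E) (b : ℝ), Continuous g → (∀ t, |g t| ≤ 1) →
      ∫ z, g z.2 * Real.cos (⟪ξ, z.1⟫ + b) ∂m = ∫ z, g z.2 * Real.cos (⟪ξ, z.1⟫ + b) ∂m') :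
    m = m' := by
  refine ext_of_forall_integral_cos fun A b => ?_
  obtain ⟨ξ, hξ⟩ := (InnerProductSpace.toDual ℝ E).surjective (A.comp (.inl ℝ E ℝ))
  set β := A (0, 1) with hβ
  have hA (z : E × ℝ) : A z = ⟪ξ, z.1⟫ + β * z.2 := by
    have hspace : ⟪ξ, z.1⟫ = A (z.1, 0) := by
      rw [← InnerProductSpace.toDual_apply_apply, hξ]
      simp
    rw [hspace, hβ, mul_comm, ← smul_eq_mul, ← map_smul, ← map_add]
    simp
  have hexpand (z : E × ℝ) : Real.cos (A z + b) =
      Real.cos (β * z.2) * Real.cos (⟪ξ, z.1⟫ + b) -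
        Real.sin (β * z.2) * Real.cos (⟪ξ, z.1⟫ + (b - Real.pi / 2)) := by
    rw [← add_sub_assoc, Real.cos_sub_pi_div_two, ← Real.cos_add, hA]
    ring_nf
  have hintegrable (n : Measure (E × ℝ)) [IsFiniteMeasure n] {g : ℝ → ℝ} (hg : Continuous g)
      (hg1 : ∀ t, |g t| ≤ 1) (b : ℝ) :
      Integrable (fun z => g z.2 * Real.cos (⟪ξ, z.1⟫ + b)) n :=
    Integrable.of_bound (by fun_prop) 1 (ae_of_all _ fun z => by
      rw [norm_mul]
      exact mul_le_one₀ (hg1 _) (norm_nonneg _) (Real.abs_cos_le_one _))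
  have hcos : Continuous fun t => Real.cos (β * t) := by fun_prop
  have hsin : Continuous fun t => Real.sin (β * t) := by fun_prop
  have hcos1 (t : ℝ) := Real.abs_cos_le_one (β * t)
  have hsin1 (t : ℝ) := Real.abs_sin_le_one (β * t)
  simp_rw [hexpand]
  rw [integral_sub (hintegrable m hcos hcos1 _) (hintegrable m hsin hsin1 _),
    integral_sub (hintegrable m' hcos hcos1 _) (hintegrable m' hsin hsin1 _),
    h _ _ _ hcos hcos1, h _ _ _ hsin hsin1]

variable [FiniteDimensional ℝ E]

theorem continuousOn_hopfLaxPoint_timeChange (hψ : ConvexOn ℝ univ ψ) (hη : IsPerturbation C η)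
    (hk : Continuous k) (ε : ℝ) :
    ContinuousOn (fun z : E × ℝ => hopfLaxPoint ψ η (timeChange ε z.2)⁻¹ (k z.2) z.1)
      (univ ×ˢ testTimes C ε k) := by
  intro z hz
  have hparam : ContinuousAt (fun z : E × ℝ => ((timeChange ε z.2)⁻¹, k z.2, z.1)) z :=
    (((contDiff_timeChange ε).continuous.comp continuous_snd).continuousAt.inv₀ hz.2.1.ne').prodMk
      ((hk.comp continuous_snd).prodMk continuous_fst).continuousAt
  have hpoint := continuousAt_hopfLaxPoint hψ hη (lt_inv_sub_one_of_mem_testTimes hz.2) z.1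
  exact (hpoint.comp_of_eq hparam rfl).continuousWithinAt

theorem tendsto_hopfLaxPoint_timeChange (hψ : ConvexOn ℝ univ ψ) (hη : IsPerturbation C η)
    {t : ℝ} (ht : t ∈ Ioo (0 : ℝ) 1) (κ : ℝ) (y : E) :
    Filter.Tendsto (fun s : ℝ => hopfLaxPoint ψ η (timeChange (s ^ 2) t)⁻¹ (s * κ) y) (nhds 0)
      (nhds (interpolationInverse ψ t y)) := by
  have hpoint : hopfLaxPoint ψ η t⁻¹ 0 y = interpolationInverse ψ t y :=
    maximizer_zero_right ψ η _ _
  have hτ : Filter.Tendsto (fun s : ℝ => timeChange (s ^ 2) t) (nhds 0) (nhds t) := by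
    have : Continuous fun s : ℝ => timeChange (s ^ 2) t := by
      unfold timeChange
      fun_prop
    exact this.tendsto' 0 t (by simp [timeChange])
  have hκ : Filter.Tendsto (fun s : ℝ => s * κ) (nhds 0) (nhds 0) :=
    (continuous_mul_const κ).tendsto' 0 0 (zero_mul κ)
  have hparam : Filter.Tendsto (fun s : ℝ => ((timeChange (s ^ 2) t)⁻¹, s * κ, y)) (nhds 0)
      (nhds (t⁻¹, 0, y)) := (hτ.inv₀ ht.1.ne').prodMk_nhds (hκ.prodMk_nhds tendsto_const_nhds)
  have hcont := continuousAt_hopfLaxPoint hψ hη (k := 0) (by simpa using inv_sub_one_pos ht) y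
  simpa only [Function.comp_def, hpoint] using hcont.tendsto.comp hparam

variable [MeasurableSpace E] [BorelSpace E]

theorem measurable_displacementMap_prodMk {T : E → E} (hT : Measurable T) :
    Measurable fun z : E × ℝ => (displacementMap T z.2 z.1, z.2) := by
  have : Measurable fun z : E × ℝ => T z.1 := hT.comp measurable_fst
  unfold displacementMap
  fun_prop

/-- The space-time measure whose time slices are the displacement interpolants of `μ` along `T`. -/
noncomputable def interpolationMeasure (μ : Measure E) (T : E → E) : Measure (E × ℝ) :=
  (μ.prod (volume.restrict (Ioo 0 1))).map fun z => (displacementMap T z.2 z.1, z.2)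

variable {T : E → E} {μ ν : Measure E} {K : Set E} {m : Measure (E × ℝ)} {v : E × ℝ → E}

theorem IsFlow.aemeasurable_interpolationInverse (h : IsFlow K μ ν m v)
    (hψ : ConvexOn ℝ univ ψ) : AEMeasurable (fun z => interpolationInverse ψ z.2 z.1) m := by
  rw [← Measure.restrict_eq_self_of_ae_mem
    (h.ae_mem.mono fun z hz => (⟨mem_univ _, hz.2⟩ : z ∈ univ ×ˢ Ioo (0 : ℝ) 1))]
  exact (continuousOn_interpolationInverse hψ).aemeasurable
    (MeasurableSet.univ.prod measurableSet_Ioo)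

variable [IsFiniteMeasure m]

theorem IsFlow.tendsto_integral_hopfLaxPoint (h : IsFlow K μ ν m v) (hK : IsCompact K)
    (hψ : ConvexOn ℝ univ ψ) (hη : IsPerturbation C η) (hk : ContDiff ℝ 1 k) (hk1 : k 1 = 0) :
    Filter.Tendsto (fun s : ℝ => ∫ z, deriv k z.2 *
        η (hopfLaxPoint ψ η (timeChange (s ^ 2) z.2)⁻¹ (s * k z.2) z.1) ∂m)
      (nhdsWithin 0 (Ioi 0))
      (nhds (∫ z, deriv k z.2 * η (interpolationInverse ψ z.2 z.1) ∂m)) := by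
  have hk' : Continuous fun z : E × ℝ => deriv k z.2 :=
    hk.continuous_deriv_one.comp continuous_snd
  refine tendsto_integral_filter_of_dominated_convergence (fun z => |deriv k z.2|) ?_ ?_
    (h.integrable_of_continuous hK hk'.abs) ?_
  · filter_upwards [eventually_Icc_subset_testTimes hη.nonneg hk hk1] with s hs
    have hmem : ∀ᵐ z ∂m, z ∈ (univ : Set E) ×ˢ testTimes C (s ^ 2) fun t => s * k t :=
      h.ae_mem.mono fun z hz => ⟨mem_univ _, hs.2 (Ioo_subset_Icc_self hz.2)⟩
    have hcont := continuousOn_hopfLaxPoint_timeChange hψ hη (hk.continuous.const_mul s) (s ^ 2)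
    have hmeas := (hη.continuous.comp_continuousOn hcont).aestronglyMeasurable (μ := m)
      (isOpen_univ.prod (isOpen_testTimes (hk.continuous.const_mul s))).measurableSet
    rw [Measure.restrict_eq_self_of_ae_mem hmem] at hmeas
    exact hk'.aestronglyMeasurable.mul hmeas
  · refine Filter.Eventually.of_forall fun s => ae_of_all _ fun z => ?_
    rw [norm_mul, Real.norm_eq_abs]
    exact mul_le_of_le_one_right (abs_nonneg _) (hη.abs_le_one _)
  · filter_upwards [h.ae_mem] with z hz
    exact (((hη.continuous.tendsto _).comp
      (tendsto_hopfLaxPoint_timeChange hψ hη hz.2 _ _)).const_mul _).mono_left nhdsWithin_le_nhds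

variable [IsFiniteMeasure μ]

-- The perturbation has size `s` and the time change is `timeChange (s ^ 2)`, so that its error
-- still vanishes after division by `s`.
theorem IsFlow.nonneg_of_perturbation (h : IsFlow K μ ν m v) (hB : IsBrenierMap K ψ T μ ν)
    (hmin : ∫ z, ‖v z‖ ^ 2 ∂m ≤ transportCost μ T) (hη : IsPerturbation C η)
    (hk : ContDiff ℝ 1 k) (hk1 : k 1 = 0) :
    0 ≤ k 0 * ∫ x, η x ∂μ + ∫ z, deriv k z.2 * η (interpolationInverse ψ z.2 z.1) ∂m := by
  have hlim := ((h.tendsto_integral_hopfLaxPoint hB.isCompact hB.convexOn hη hk hk1).const_add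
    (k 0 * ∫ x, η x ∂μ))
  have hs : Filter.Tendsto (fun s : ℝ => s) (nhdsWithin 0 (Ioi 0)) (nhds 0) :=
    Filter.tendsto_id.mono_left nhdsWithin_le_nhds
  have hbound := (((hs.pow 2).const_mul 2).const_sub 1).mul hlim |>.add
    (hs.mul_const (transportCost μ T))
  simp only [ne_eq, OfNat.ofNat_ne_zero, not_false_eq_true, zero_pow, mul_zero, sub_zero, one_mul,
    zero_mul, add_zero] at hbound
  refine ge_of_tendsto hbound ?_
  filter_upwards [eventually_Icc_subset_testTimes hη.nonneg hk hk1, self_mem_nhdsWithin]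
    with s ⟨hε, htimes⟩ (hs0 : 0 < s)
  have := h.le_energy_of_perturbation hB hη hε (contDiff_const.mul hk) (by simp [hk1]) htimes
  simp only [deriv_const_mul_field, mul_assoc, integral_const_mul] at this
  nlinarith

theorem IsFlow.integral_perturbation_eq (h : IsFlow K μ ν m v) (hB : IsBrenierMap K ψ T μ ν)
    (hmin : ∫ z, ‖v z‖ ^ 2 ∂m ≤ transportCost μ T) (hη : IsPerturbation C η)
    (hk : ContDiff ℝ 1 k) (hk1 : k 1 = 0) :
    ∫ z, deriv k z.2 * η (interpolationInverse ψ z.2 z.1) ∂m = -(k 0 * ∫ x, η x ∂μ) := by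
  have hpos := h.nonneg_of_perturbation hB hmin hη hk hk1
  have hneg := h.nonneg_of_perturbation hB hmin hη hk.neg (by simp [hk1])
  simp only [deriv.fun_neg, neg_mul, integral_neg] at hneg
  linarith

theorem IsFlow.integral_mul_comp_interpolationInverse (h : IsFlow K μ ν m v)
    (hB : IsBrenierMap K ψ T μ ν) (hmin : ∫ z, ‖v z‖ ^ 2 ∂m ≤ transportCost μ T)
    (hη : IsPerturbation C η) {g : ℝ → ℝ} (hg : Continuous g) :
    ∫ z, g z.2 * η (interpolationInverse ψ z.2 z.1) ∂m =
      ∫ z, g z.2 * η z.1 ∂(μ.prod (volume.restrict (Ioo 0 1))) := by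
  have hderiv (t : ℝ) : HasDerivAt (fun t => ∫ s in (1 : ℝ)..t, g s) (g t) t :=
    intervalIntegral.integral_hasDerivAt_right (hg.intervalIntegrable _ _)
      (hg.stronglyMeasurableAtFilter _ _) hg.continuousAt
  have hderiv_eq : deriv (fun t => ∫ s in (1 : ℝ)..t, g s) = g := funext fun t => (hderiv t).deriv
  have := h.integral_perturbation_eq hB hmin hη (k := fun t => ∫ s in (1 : ℝ)..t, g s)
    (contDiff_one_iff_deriv.2 ⟨fun t => (hderiv t).differentiableAt, hderiv_eq.symm ▸ hg⟩)
    intervalIntegral.integral_same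
  rw [hderiv_eq, intervalIntegral.integral_symm, neg_mul, neg_neg,
    intervalIntegral.integral_of_le zero_le_one, integral_Ioc_eq_integral_Ioo] at this
  simp_rw [this, mul_comm (g _)]
  rw [integral_prod_mul η g, mul_comm]

theorem IsFlow.map_interpolationInverse (h : IsFlow K μ ν m v) (hB : IsBrenierMap K ψ T μ ν)
    (hmin : ∫ z, ‖v z‖ ^ 2 ∂m ≤ transportCost μ T) :
    m.map (fun z => (interpolationInverse ψ z.2 z.1, z.2)) =
      μ.prod (volume.restrict (Ioo 0 1)) := by
  have hS := (h.aemeasurable_interpolationInverse hB.convexOn).prodMk measurable_snd.aemeasurable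
  refine ext_prod_of_forall_integral_mul_cos fun g ξ b hg _ => ?_
  rw [integral_map hS (by fun_prop)]
  exact h.integral_mul_comp_interpolationInverse hB hmin (isPerturbation_cos_inner_add ξ b) hg

theorem IsFlow.eq_interpolationMeasure (h : IsFlow K μ ν m v) (hB : IsBrenierMap K ψ T μ ν)
    (hmin : ∫ z, ‖v z‖ ^ 2 ∂m ≤ transportCost μ T) : m = interpolationMeasure μ T := by
  have hmap := h.map_interpolationInverse hB hmin
  have hS := (h.aemeasurable_interpolationInverse hB.convexOn).prodMk measurable_snd.aemeasurable
  have hgrad : ∀ᵐ z ∂m, HasGradientAt ψ (T (interpolationInverse ψ z.2 z.1))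
      (interpolationInverse ψ z.2 z.1) := by
    have : ∀ᵐ z ∂(μ.prod (volume.restrict (Ioo (0 : ℝ) 1))), HasGradientAt ψ (T z.1) z.1 :=
      Measure.quasiMeasurePreserving_fst.ae hB.ae_hasGradientAt
    exact ae_of_ae_map hS (hmap ▸ this)
  have hinv : ∀ᵐ z ∂m, (displacementMap T z.2 (interpolationInverse ψ z.2 z.1), z.2) = z := by
    filter_upwards [hgrad, h.ae_mem] with z hz hzt
    rw [displacementMap_interpolationInverse hB.convexOn hzt.2 hz]
  have hΦ := measurable_displacementMap_prodMk hB.measurable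
  rw [interpolationMeasure, ← hmap, AEMeasurable.map_map_of_aemeasurable hΦ.aemeasurable hS]
  exact (Measure.map_id (μ := m)).symm.trans (Measure.map_congr (hinv.mono fun z hz => hz.symm))

end Uniqueness

section Interpolation

theorem measure_preimage_le_of_ae_mem_image {X Y Z : Type*} [MeasurableSpace X] {μ : Measure X}
    {D : X → Y} {S : Y → Z} {R : X → Z} (hS : ∀ᵐ x ∂μ, S (D x) = R x) (B : Set Y) :
    μ (D ⁻¹' B) ≤ μ (R ⁻¹' (S '' B)) :=
  measure_mono_ae (hS.mono fun x hx hxB => show R x ∈ S '' B from hx ▸ mem_image_of_mem S hxB)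

theorem integral_fderiv_displacementMap {E : Type*} [NormedAddCommGroup E] [InnerProductSpace ℝ E]
    {φ : E × ℝ → ℝ} (hφ : ContDiff ℝ 1 φ) (T : E → E) (x : E) :
    ∫ t in (0 : ℝ)..1, fderiv ℝ φ (displacementMap T t x, t) (T x - x, 1) =
      φ (T x, 1) - φ (x, 0) := by
  have hline (t : ℝ) : HasDerivAt (fun t => displacementMap T t x) (T x - x) t := by
    have hlin : (fun t => displacementMap T t x) = fun t => x + t • (T x - x) := by
      ext1 t
      rw [displacementMap]
      module
    rw [hlin]
    simpa using ((hasDerivAt_id t).smul_const (T x - x)).const_add x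
  have hderiv (t : ℝ) : HasDerivAt (fun t => φ (displacementMap T t x, t))
      (fderiv ℝ φ (displacementMap T t x, t) (T x - x, 1)) t :=
    HasFDerivAt.comp_hasDerivAt t (f := fun t => (displacementMap T t x, t))
      (hφ.differentiable one_ne_zero _).hasFDerivAt ((hline t).prodMk (hasDerivAt_id t))
  have hcont : Continuous fun t => fderiv ℝ φ (displacementMap T t x, t) (T x - x, 1) := by
    have hpath : Continuous fun t => displacementMap T t x :=
      continuous_iff_continuousAt.2 fun t => (hline t).continuousAt
    have := hφ.continuous_fderiv one_ne_zero
    fun_prop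
  rw [intervalIntegral.integral_eq_sub_of_hasDerivAt (fun t _ => hderiv t)
    (hcont.intervalIntegrable _ _)]
  simp [displacementMap]

variable {E : Type*} [NormedAddCommGroup E] [InnerProductSpace ℝ E] [FiniteDimensional ℝ E]
  [MeasurableSpace E] {ψ : E → ℝ} {T : E → E} {μ ν : Measure E} {K Ω : Set E} {t : ℝ}

/-- The velocity field of the displacement interpolation, extended by `0` outside of the time
interval `(0, 1)`. -/
noncomputable def interpolationVelocityField (ψ : E → ℝ) : E × ℝ → E :=
  (univ ×ˢ Ioo (0 : ℝ) 1).indicator fun z => interpolationVelocity ψ z.2 z.1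

theorem IsBrenierMap.ae_interpolationVelocityField_eq (h : IsBrenierMap K ψ T μ ν) :
    ∀ᵐ z ∂(μ.prod (volume.restrict (Ioo (0 : ℝ) 1))),
      interpolationVelocityField ψ (displacementMap T z.2 z.1, z.2) = T z.1 - z.1 := by
  filter_upwards [Measure.quasiMeasurePreserving_fst.ae h.ae_hasGradientAt,
    Measure.quasiMeasurePreserving_snd.ae (ae_restrict_mem measurableSet_Ioo)] with z hz hzt
  rw [interpolationVelocityField, indicator_of_mem (mk_mem_prod (mem_univ _) hzt)]
  exact interpolationVelocity_displacementMap h.convexOn hzt hz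

variable [BorelSpace E]

theorem measurable_displacementMap (hT : Measurable T) (t : ℝ) : Measurable (displacementMap T t) :=
  (measurable_id.const_smul (1 - t)).add (hT.const_smul t)

theorem IsBrenierMap.map_displacementMap_le_addHaar (h : IsBrenierMap K ψ T μ ν)
    {lam : Measure E} [lam.IsAddHaarMeasure] (hμ : μ ≤ lam) (hν : ν ≤ lam)
    (ht : t ∈ Ioo (0 : ℝ) 1) :
    μ.map (displacementMap T t) ≤ lam := by
  set S := interpolationInverse ψ t
  set R := fun y => S y + interpolationVelocity ψ t y
  have hsum (y : E) : (1 - t) • S y + t • R y = y := by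
    nth_rw 3 [← interpolationInverse_add_smul_interpolationVelocity (ψ := ψ) ht.1.ne' y]
    simp only [S, R]
    module
  have hD := measurable_displacementMap h.measurable t
  have hS : ∀ᵐ x ∂μ, S (displacementMap T t x) = x := h.ae_hasGradientAt.mono fun x hx =>
    interpolationInverse_displacementMap h.convexOn ht hx
  have hR : ∀ᵐ x ∂μ, R (displacementMap T t x) = T x := h.ae_hasGradientAt.mono fun x hx => by
    simp only [S, R]
    rw [interpolationInverse_displacementMap h.convexOn ht hx,
      interpolationVelocity_displacementMap h.convexOn ht hx, add_sub_cancel]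
  refine le_addHaar_of_le_addHaar_image lam ht
    (hasGradientAt_interpolationInverse h.convexOn ht) (fun y y' =>
      (isSubgradientAt_interpolationInverse h.convexOn ht y).inner_sub_nonneg
        (isSubgradientAt_interpolationInverse h.convexOn ht y')) hsum
    (fun B hB => ?_) fun B hB => ?_
  · rw [Measure.map_apply hD hB]
    exact (measure_preimage_le_of_ae_mem_image hS B).trans (hμ _)
  · rw [Measure.map_apply hD hB]
    refine (measure_preimage_le_of_ae_mem_image hR B).trans ?_
    exact (Measure.le_map_apply h.measurable.aemeasurable _).trans (h.map_eq ▸ hν _)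

theorem IsBrenierMap.map_displacementMap_le_restrict (h : IsBrenierMap K ψ T μ ν)
    {lam : Measure E} [lam.IsAddHaarMeasure] (hΩ : Convex ℝ Ω) (hΩm : MeasurableSet Ω)
    (hμ : μ ≤ lam.restrict Ω) (hν : ν ≤ lam.restrict Ω) (ht : t ∈ Icc (0 : ℝ) 1) :
    μ.map (displacementMap T t) ≤ lam.restrict Ω := by
  have hD := measurable_displacementMap h.measurable t
  obtain rfl | rfl | ht' := eq_endpoints_or_mem_Ioo_of_mem_Icc ht
  · have hid : displacementMap T 0 = id := by ext; simp [displacementMap]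
    rwa [hid, Measure.map_id]
  · have hid : displacementMap T 1 = T := by ext; simp [displacementMap]
    rwa [hid, h.map_eq]
  · have hmem : ∀ᵐ y ∂μ.map (displacementMap T t), y ∈ Ω := by
      refine (ae_map_iff hD.aemeasurable hΩm).2 ?_
      have hνΩ : ∀ᵐ y ∂μ.map T, y ∈ Ω :=
        (Measure.absolutelyContinuous_of_le (h.map_eq ▸ hν)).ae_le (ae_restrict_mem hΩm)
      filter_upwards [(Measure.absolutelyContinuous_of_le hμ).ae_le (ae_restrict_mem hΩm),
        ae_of_ae_map h.measurable.aemeasurable hνΩ] with x hx hTx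
        using displacementMap_mem hΩ ht hx hTx
    rw [← Measure.restrict_eq_self_of_ae_mem hmem]
    exact Measure.restrict_mono le_rfl (h.map_displacementMap_le_addHaar
      (hμ.trans Measure.restrict_le_self) (hν.trans Measure.restrict_le_self) ht')

variable [IsFiniteMeasure μ]

instance : IsFiniteMeasure (interpolationMeasure μ T) := by
  unfold interpolationMeasure
  infer_instance

theorem IsBrenierMap.integrable_comp_prod (h : IsBrenierMap K ψ T μ ν) {F : Type*}
    [NormedAddCommGroup F] {f : E × E × ℝ → F} (hf : Continuous f) :
    Integrable (fun z : E × ℝ => f (z.1, T z.1, z.2)) (μ.prod (volume.restrict (Ioo 0 1))) := by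
  have hgraph : Measurable fun z : E × ℝ => (z.1, T z.1, z.2) :=
    measurable_fst.prodMk ((h.measurable.comp measurable_fst).prodMk measurable_snd)
  have hK := h.isCompact.prod (h.isCompact.prod (isCompact_Icc (a := (0 : ℝ)) (b := 1)))
  refine (integrable_map_measure hf.aestronglyMeasurable hgraph.aemeasurable).1
    (integrable_of_continuous_of_ae_mem_isCompact hK ?_ hf)
  refine (ae_map_iff hgraph.aemeasurable hK.isClosed.measurableSet).2 ?_
  filter_upwards [Measure.quasiMeasurePreserving_fst.ae h.ae_mem_left,
    Measure.quasiMeasurePreserving_fst.ae h.ae_apply_mem,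
    Measure.quasiMeasurePreserving_snd.ae (ae_restrict_mem measurableSet_Ioo)] with z hz hTz hzt
    using ⟨hz, hTz, Ioo_subset_Icc_self hzt⟩

theorem measurable_interpolationVelocityField (hψ : ConvexOn ℝ univ ψ) :
    Measurable (interpolationVelocityField ψ) := by
  classical
  have hcont : ContinuousOn (fun z : E × ℝ => interpolationVelocity ψ z.2 z.1)
      (univ ×ˢ Ioo (0 : ℝ) 1) :=
    (continuousOn_snd.inv₀ fun z hz => hz.2.1.ne').smul
      (continuousOn_fst.sub (continuousOn_interpolationInverse hψ))
  rw [interpolationVelocityField, ← piecewise_eq_indicator]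
  exact hcont.measurable_piecewise continuousOn_const (MeasurableSet.univ.prod measurableSet_Ioo)

theorem IsBrenierMap.integrable_comp_displacementMap (h : IsBrenierMap K ψ T μ ν) {F : Type*}
    [NormedAddCommGroup F] {f : (E × ℝ) × E → F} (hf : Continuous f) :
    Integrable (fun z : E × ℝ => f ((displacementMap T z.2 z.1, z.2), T z.1 - z.1))
      (μ.prod (volume.restrict (Ioo 0 1))) :=
  h.integrable_comp_prod (f := fun q => f (((1 - q.2.2) • q.1 + q.2.2 • q.2.1, q.2.2), q.2.1 - q.1))
    (by fun_prop)

theorem aestronglyMeasurable_comp_interpolationVelocityField (hψ : ConvexOn ℝ univ ψ)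
    {F : Type*} [NormedAddCommGroup F] {f : (E × ℝ) × E → F} (hf : Continuous f)
    (m : Measure (E × ℝ)) :
    AEStronglyMeasurable (fun z => f (z, interpolationVelocityField ψ z)) m :=
  hf.comp_aestronglyMeasurable
    (measurable_id.prodMk (measurable_interpolationVelocityField hψ)).aestronglyMeasurable

theorem IsBrenierMap.integrable_interpolationMeasure (h : IsBrenierMap K ψ T μ ν) {F : Type*}
    [NormedAddCommGroup F] {f : (E × ℝ) × E → F} (hf : Continuous f) :
    Integrable (fun z => f (z, interpolationVelocityField ψ z)) (interpolationMeasure μ T) := by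
  rw [interpolationMeasure, integrable_map_measure
    (aestronglyMeasurable_comp_interpolationVelocityField h.convexOn hf _)
    (measurable_displacementMap_prodMk h.measurable).aemeasurable]
  refine (h.integrable_comp_displacementMap hf).congr ?_
  filter_upwards [h.ae_interpolationVelocityField_eq] with z hz
  rw [Function.comp_apply, hz]

theorem IsBrenierMap.integral_interpolationMeasure (h : IsBrenierMap K ψ T μ ν) {F : Type*}
    [NormedAddCommGroup F] [NormedSpace ℝ F] {f : (E × ℝ) × E → F} (hf : Continuous f) :
    ∫ z, f (z, interpolationVelocityField ψ z) ∂interpolationMeasure μ T =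
      ∫ x, (∫ t in (0 : ℝ)..1, f ((displacementMap T t x, t), T x - x)) ∂μ := by
  rw [interpolationMeasure, integral_map
    (measurable_displacementMap_prodMk h.measurable).aemeasurable
    (aestronglyMeasurable_comp_interpolationVelocityField h.convexOn hf _)]
  simp_rw [intervalIntegral.integral_of_le zero_le_one, integral_Ioc_eq_integral_Ioo]
  rw [← integral_prod _ (h.integrable_comp_displacementMap hf)]
  refine integral_congr_ae ?_
  filter_upwards [h.ae_interpolationVelocityField_eq] with z hz
  rw [hz]

theorem IsBrenierMap.isFlow (h : IsBrenierMap K ψ T μ ν) (hK : Convex ℝ K) :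
    IsFlow K μ ν (interpolationMeasure μ T) (interpolationVelocityField ψ) where
  ae_mem := by
    refine (ae_map_iff (measurable_displacementMap_prodMk h.measurable).aemeasurable
      (h.isCompact.isClosed.measurableSet.prod measurableSet_Ioo)).2 ?_
    filter_upwards [Measure.quasiMeasurePreserving_fst.ae h.ae_mem_left,
      Measure.quasiMeasurePreserving_fst.ae h.ae_apply_mem,
      Measure.quasiMeasurePreserving_snd.ae (ae_restrict_mem measurableSet_Ioo)] with z hz hTz hzt
      using ⟨displacementMap_mem hK (Ioo_subset_Icc_self hzt) hz hTz, hzt⟩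
  memLp := (memLp_two_iff_integrable_sq_norm
    (measurable_interpolationVelocityField h.convexOn).aestronglyMeasurable).2
      (h.integrable_interpolationMeasure (f := fun q => ‖q.2‖ ^ 2) (by fun_prop))
  continuityEquation φ hφ := by
    have hcont := hφ.continuous
    have : Continuous (fderiv ℝ φ) := hφ.continuous_fderiv one_ne_zero
    rw [h.integral_interpolationMeasure (f := fun q => fderiv ℝ φ q.1 (q.2, 1)) (by fun_prop)]
    simp_rw [integral_fderiv_displacementMap hφ T]
    rw [← h.map_eq, integral_map h.measurable.aemeasurable (by fun_prop)]
    exact integral_sub (h.integrable_comp (f := fun q => φ (q.2, 1)) (by fun_prop))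
      (h.integrable_comp (f := fun q => φ (q.1, 0)) (by fun_prop))

theorem IsBrenierMap.integral_norm_sq_interpolationVelocityField (h : IsBrenierMap K ψ T μ ν) :
    ∫ z, ‖interpolationVelocityField ψ z‖ ^ 2 ∂interpolationMeasure μ T = transportCost μ T := by
  rw [h.integral_interpolationMeasure (f := fun q => ‖q.2‖ ^ 2) (by fun_prop), transportCost]
  simp

end Interpolation

section Density

/-- The measure with real-valued density `f` with respect to `lam`; negative values of `f` are
truncated to `0`. -/
noncomputable abbrev densityMeasure {X : Type*} [MeasurableSpace X] (lam : Measure X) (f : X → ℝ) :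
    Measure X :=
  lam.withDensity fun x => ENNReal.ofReal (f x)

variable {X : Type*} [MeasurableSpace X] {lam : Measure X} {f : X → ℝ}

theorem lintegral_densityMeasure (hf : Measurable f) {g : X → ℝ≥0∞} (hg : Measurable g) :
    ∫⁻ x, g x ∂densityMeasure lam f = ∫⁻ x, ENNReal.ofReal (f x) * g x ∂lam :=
  lintegral_withDensity_eq_lintegral_mul lam hf.ennreal_ofReal hg

theorem ae_toReal_ofReal_smul_eq_mul (h0 : ∀ᵐ x ∂lam, 0 ≤ f x) (g : X → ℝ) :
    (fun x => (ENNReal.ofReal (f x)).toReal • g x) =ᵐ[lam] fun x => f x * g x :=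
  h0.mono fun x hx => by
    dsimp only
    rw [ENNReal.toReal_ofReal hx, smul_eq_mul]

theorem integral_densityMeasure (hf : Measurable f) (h0 : ∀ᵐ x ∂lam, 0 ≤ f x) (g : X → ℝ) :
    ∫ x, g x ∂densityMeasure lam f = ∫ x, f x * g x ∂lam := by
  rw [integral_withDensity_eq_integral_toReal_smul hf.ennreal_ofReal
    (ae_of_all _ fun _ => ENNReal.ofReal_lt_top)]
  exact integral_congr_ae (ae_toReal_ofReal_smul_eq_mul h0 g)

theorem integrable_densityMeasure_iff (hf : Measurable f) (h0 : ∀ᵐ x ∂lam, 0 ≤ f x) {g : X → ℝ} :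
    Integrable g (densityMeasure lam f) ↔ Integrable (fun x => f x * g x) lam := by
  rw [integrable_withDensity_iff_integrable_smul' hf.ennreal_ofReal
    (ae_of_all _ fun _ => ENNReal.ofReal_lt_top)]
  exact integrable_congr (ae_toReal_ofReal_smul_eq_mul h0 g)

theorem densityMeasure_le (h1 : ∀ᵐ x ∂lam, f x ≤ 1) : densityMeasure lam f ≤ lam := by
  conv_rhs => rw [← withDensity_one (μ := lam)]
  exact withDensity_mono (h1.mono fun x hx => ENNReal.ofReal_le_one.2 hx)

theorem densityMeasure_restrict_eq {s : Set X} (hs : MeasurableSet s)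
    (hf : Function.support f ⊆ s) : densityMeasure (lam.restrict s) f = densityMeasure lam f := by
  rw [densityMeasure, densityMeasure, ← withDensity_indicator hs]
  congr 1
  refine indicator_eq_self.2 fun x hx => hf fun hfx => hx ?_
  simp only [hfx, ENNReal.ofReal_zero]

theorem exists_measurable_density_of_le {Y : Type*} [MeasurableSpace Y]
    [MeasurableSpace.CountableOrCountablyGenerated Y X] [IsFiniteMeasure lam]
    (κ : ProbabilityTheory.Kernel Y X) [ProbabilityTheory.IsFiniteKernel κ] {s : Set Y}
    (hκ : ∀ t ∈ s, κ t ≤ lam) :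
    ∃ c : X → Y → ℝ, (Measurable fun z : X × Y => c z.1 z.2) ∧ (∀ x t, c x t ∈ Icc (0 : ℝ) 1) ∧
      ∀ t ∈ s, densityMeasure lam (fun x => c x t) = κ t := by
  let η := ProbabilityTheory.Kernel.const Y lam
  refine ⟨fun x t => min 1 (κ.rnDeriv η t x).toReal, ?_, fun x t =>
    ⟨le_min zero_le_one ENNReal.toReal_nonneg, min_le_left _ _⟩, fun t ht => ?_⟩
  · exact measurable_const.min
      ((κ.measurable_rnDeriv η).ennreal_toReal.comp measurable_swap)
  · rw [← Measure.withDensity_rnDeriv_eq _ _ (Measure.absolutelyContinuous_of_le (hκ t ht))]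
    refine withDensity_congr_ae ?_
    filter_upwards [ProbabilityTheory.Kernel.rnDeriv_eq_rnDeriv_measure (κ := κ) (η := η) (a := t),
      Measure.rnDeriv_le_one_of_le (hκ t ht)] with x hx hx1
    have hle : κ.rnDeriv η t x ≤ 1 := hx.trans_le hx1
    rw [min_eq_right (ENNReal.toReal_le_of_le_ofReal zero_le_one (by simpa using hle)),
      ENNReal.ofReal_toReal (ne_top_of_le_ne_top ENNReal.one_ne_top hle), hx,
      ProbabilityTheory.Kernel.const_apply]

/-- The space-time measure `c(x, t) dλ(x) dt` over the time interval `(0, 1)`. -/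
noncomputable abbrev concentrationMeasure (lam : Measure X) (c : X → ℝ → ℝ) : Measure (X × ℝ) :=
  densityMeasure (lam.prod (volume.restrict (Ioo 0 1))) fun z => c z.1 z.2

variable {c c' : X → ℝ → ℝ}

theorem lintegral_concentrationMeasure [SFinite lam] (hc : Measurable fun z : X × ℝ => c z.1 z.2)
    {g : X × ℝ → ℝ≥0∞} (hg : Measurable g) :
    ∫⁻ z, g z ∂concentrationMeasure lam c =
      ∫⁻ t in Icc 0 1, ∫⁻ x, ENNReal.ofReal (c x t) * g (x, t) ∂lam := by
  rw [lintegral_densityMeasure hc hg, ← Measure.restrict_congr_set Ioo_ae_eq_Icc]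
  exact lintegral_prod_symm _ (hc.ennreal_ofReal.mul hg).aemeasurable

theorem integral_concentrationMeasure [SFinite lam] (hc : Measurable fun z : X × ℝ => c z.1 z.2)
    (h0 : ∀ᵐ z ∂(lam.prod (volume.restrict (Ioo 0 1))), 0 ≤ c z.1 z.2) {g : X × ℝ → ℝ}
    (hg : Integrable g (concentrationMeasure lam c)) :
    ∫ z, g z ∂concentrationMeasure lam c =
      ∫ t in Icc 0 1, ∫ x, c x t * g (x, t) ∂lam := by
  rw [integral_densityMeasure hc h0, ← Measure.restrict_congr_set Ioo_ae_eq_Icc]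
  exact integral_prod_symm _ ((integrable_densityMeasure_iff hc h0).1 hg)

theorem ae_densityMeasure_eq_of_concentrationMeasure_eq [SigmaFinite lam]
    (hc : Measurable fun z : X × ℝ => c z.1 z.2) (hc' : Measurable fun z : X × ℝ => c' z.1 z.2)
    (h : concentrationMeasure lam c = concentrationMeasure lam c') :
    ∀ᵐ t ∂volume.restrict (Icc (0 : ℝ) 1),
      densityMeasure lam (fun x => c x t) = densityMeasure lam (fun x => c' x t) := by
  have hae := (withDensity_eq_iff_of_sigmaFinite hc.ennreal_ofReal.aemeasurable
    hc'.ennreal_ofReal.aemeasurable).1 h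
  rw [← Measure.restrict_congr_set Ioo_ae_eq_Icc]
  filter_upwards [Measure.ae_ae_of_ae_prod (Measure.measurePreserving_swap.quasiMeasurePreserving.ae
    hae)] with t ht using withDensity_congr_ae ht

end Density

section DensityOfInterpolation

variable {E : Type*} [NormedAddCommGroup E] [InnerProductSpace ℝ E] [FiniteDimensional ℝ E]
  [MeasurableSpace E] [BorelSpace E] {ψ : E → ℝ} {T : E → E} {μ ν : Measure E}
  {K Ω : Set E} [IsFiniteMeasure μ]

theorem concentrationMeasure_eq_interpolationMeasure {lam : Measure E} [SFinite lam]
    (hT : Measurable T) {c : E → ℝ → ℝ} (hc : Measurable fun z : E × ℝ => c z.1 z.2)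
    (hslice : ∀ t ∈ Icc (0 : ℝ) 1,
      densityMeasure lam (fun x => c x t) = μ.map (displacementMap T t)) :
    concentrationMeasure lam c = interpolationMeasure μ T := by
  refine Measure.ext_of_lintegral _ fun g hg => ?_
  have hpath := measurable_displacementMap_prodMk hT
  rw [lintegral_concentrationMeasure hc hg, interpolationMeasure, lintegral_map hg hpath,
    lintegral_prod_symm (fun z => g (displacementMap T z.2 z.1, z.2))
      (hg.comp hpath).aemeasurable, Measure.restrict_congr_set Ioo_ae_eq_Icc]
  refine setLIntegral_congr_fun measurableSet_Icc fun t ht => ?_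
  dsimp only
  have hct : Measurable fun x => c x t := hc.comp measurable_prodMk_right
  have hgt : Measurable fun x => g (x, t) := hg.comp measurable_prodMk_right
  rw [← lintegral_densityMeasure hct hgt, hslice t ht]
  exact lintegral_map hgt (measurable_displacementMap hT t)

theorem IsBrenierMap.exists_density (h : IsBrenierMap K ψ T μ ν) {lam : Measure E}
    [lam.IsAddHaarMeasure] (hΩ : Convex ℝ Ω) (hΩm : MeasurableSet Ω)
    [IsFiniteMeasure (lam.restrict Ω)] (hμ : μ ≤ lam.restrict Ω) (hν : ν ≤ lam.restrict Ω) :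
    ∃ c : E → ℝ → ℝ, (Measurable fun z : E × ℝ => c z.1 z.2) ∧ (∀ x t, c x t ∈ Icc (0 : ℝ) 1) ∧
      ∀ t ∈ Icc (0 : ℝ) 1,
        densityMeasure (lam.restrict Ω) (fun x => c x t) = μ.map (displacementMap T t) := by
  have hpath : Measurable fun q : ℝ × E => displacementMap T q.1 q.2 :=
    measurable_fst.comp ((measurable_displacementMap_prodMk h.measurable).comp measurable_swap)
  let κ := ((ProbabilityTheory.Kernel.id (α := ℝ)).prod (ProbabilityTheory.Kernel.const ℝ μ)).map
    fun q => displacementMap T q.1 q.2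
  have hκ (t : ℝ) : κ t = μ.map (displacementMap T t) := by
    rw [ProbabilityTheory.Kernel.map_apply _ hpath, ProbabilityTheory.Kernel.prod_apply,
      ProbabilityTheory.Kernel.id_apply, ProbabilityTheory.Kernel.const_apply,
      Measure.dirac_prod, Measure.map_map hpath measurable_prodMk_left]
    rfl
  simp_rw [← hκ]
  refine exists_measurable_density_of_le κ fun t ht => ?_
  rw [hκ]
  exact h.map_displacementMap_le_restrict hΩ hΩm hμ hν ht

end DensityOfInterpolation

section Box

variable {d : ℕ} {L : ℝ}

theorem box_eq_preimage :
    box d L = EuclideanSpace.equiv (Fin d) ℝ ⁻¹' univ.pi fun _ => Ioo (-L) L := by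
  ext x
  simp [box]

theorem isOpen_box : IsOpen (box d L) :=
  box_eq_preimage ▸ (isOpen_set_pi finite_univ fun _ _ => isOpen_Ioo).preimage
    (EuclideanSpace.equiv (Fin d) ℝ).continuous

theorem convex_box : Convex ℝ (box d L) :=
  box_eq_preimage ▸ (convex_pi fun _ _ => convex_Ioo _ _).linear_preimage
    (EuclideanSpace.equiv (Fin d) ℝ).toLinearMap

theorem isBounded_box : Bornology.IsBounded (box d L) := by
  refine ((EuclideanSpace.equiv (Fin d) ℝ).toHomeomorph.isCompact_preimage.2
    (isCompact_univ_pi fun _ => isCompact_Icc (a := -L) (b := L))).isBounded.subset ?_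
  rw [box_eq_preimage]
  exact preimage_mono (pi_mono fun _ _ => Ioo_subset_Icc_self)

instance : IsFiniteMeasure (volume.restrict (box d L)) :=
  ⟨by simpa using isBounded_box.measure_lt_top⟩

end Box

section Admissible

variable {d : ℕ} {L : ℝ} {ρ₀ ρ₁ : EuclideanSpace ℝ (Fin d) → ℝ}
  {c : EuclideanSpace ℝ (Fin d) → ℝ → ℝ}
  {v : EuclideanSpace ℝ (Fin d) → ℝ → EuclideanSpace ℝ (Fin d)}

theorem lintegral_mul_norm_sq (hc : Measurable fun z : EuclideanSpace ℝ (Fin d) × ℝ => c z.1 z.2)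
    (hv : Measurable fun z : EuclideanSpace ℝ (Fin d) × ℝ => v z.1 z.2) :
    ∫⁻ t in Icc (0 : ℝ) 1, ∫⁻ x in box d L, ENNReal.ofReal (c x t * ‖v x t‖ ^ 2) =
      ∫⁻ z, ENNReal.ofReal (‖v z.1 z.2‖ ^ 2)
        ∂concentrationMeasure (volume.restrict (box d L)) c := by
  rw [lintegral_concentrationMeasure hc (hv.norm.pow_const 2).ennreal_ofReal]
  simp_rw [ENNReal.ofReal_mul' (sq_nonneg ‖v _ _‖)]

theorem inner_gradient_add_deriv {E : Type*} [NormedAddCommGroup E] [InnerProductSpace ℝ E]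
    [CompleteSpace E] {φ : E → ℝ → ℝ} {x : E} {t : ℝ}
    (hφ : DifferentiableAt ℝ (fun z : E × ℝ => φ z.1 z.2) (x, t)) (w : E) :
    deriv (fun s => φ x s) t + ⟪w, gradient (fun y => φ y t) x⟫ =
      fderiv ℝ (fun z : E × ℝ => φ z.1 z.2) (x, t) (w, 1) := by
  rw [apply_prod_one_eq, fderiv_comp_inl_eq_fderiv hφ, fderiv_apply_zero_one_eq_deriv hφ,
    real_inner_comm, gradient, InnerProductSpace.toDual_symm_apply, add_comm]

theorem ae_mem_box_prod :
    ∀ᵐ z ∂((volume.restrict (box d L)).prod (volume.restrict (Ioo (0 : ℝ) 1))),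
      z ∈ box d L ×ˢ Ioo (0 : ℝ) 1 := by
  rw [Measure.prod_restrict]
  exact ae_restrict_mem (isOpen_box.measurableSet.prod measurableSet_Ioo)

theorem ae_mem_closure_box :
    ∀ᵐ z ∂concentrationMeasure (volume.restrict (box d L)) c,
      z ∈ closure (box d L) ×ˢ Ioo (0 : ℝ) 1 := by
  filter_upwards [(withDensity_absolutelyContinuous _ _).ae_le ae_mem_box_prod] with z hz
    using ⟨subset_closure hz.1, hz.2⟩

theorem ae_mem_Icc_of_forall_box (h : ∀ x ∈ box d L, ∀ t ∈ Icc (0 : ℝ) 1, c x t ∈ Icc (0 : ℝ) 1) :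
    ∀ᵐ z ∂((volume.restrict (box d L)).prod (volume.restrict (Ioo (0 : ℝ) 1))),
      c z.1 z.2 ∈ Icc (0 : ℝ) 1 :=
  ae_mem_box_prod.mono fun z hz => h z.1 hz.1 z.2 (Ioo_subset_Icc_self hz.2)

theorem isFiniteMeasure_concentrationMeasure
    (h : ∀ x ∈ box d L, ∀ t ∈ Icc (0 : ℝ) 1, c x t ∈ Icc (0 : ℝ) 1) :
    IsFiniteMeasure (concentrationMeasure (volume.restrict (box d L)) c) :=
  isFiniteMeasure_of_le _
    (densityMeasure_le ((ae_mem_Icc_of_forall_box h).mono fun _ hz => hz.2))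

theorem memLp_two_iff_lintegral_norm_sq_lt_top {X F : Type*} [MeasurableSpace X]
    [NormedAddCommGroup F] {m : Measure X} {w : X → F} (hw : AEStronglyMeasurable w m) :
    MemLp w 2 m ↔ ∫⁻ z, ENNReal.ofReal (‖w z‖ ^ 2) ∂m < ⊤ := by
  rw [memLp_two_iff_integrable_sq_norm hw,
    ← hasFiniteIntegral_iff_ofReal (ae_of_all _ fun z => sq_nonneg ‖w z‖)]
  exact and_iff_right (hw.norm.pow 2)

theorem setIntegral_box_mul {ρ : EuclideanSpace ℝ (Fin d) → ℝ} (hρ : Measurable ρ)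
    (h0 : ∀ x, 0 ≤ ρ x) (hbox : Function.support ρ ⊆ box d L)
    (g : EuclideanSpace ℝ (Fin d) → ℝ) :
    ∫ x in box d L, ρ x * g x = ∫ x, g x ∂densityMeasure volume ρ := by
  rw [← densityMeasure_restrict_eq isOpen_box.measurableSet hbox,
    integral_densityMeasure hρ (ae_of_all _ h0)]

theorem integral_mul_deriv_add_inner_gradient
    (hc : Measurable fun z : EuclideanSpace ℝ (Fin d) × ℝ => c z.1 z.2)
    (hrange : ∀ x ∈ box d L, ∀ t ∈ Icc (0 : ℝ) 1, c x t ∈ Icc (0 : ℝ) 1)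
    (hv : MemLp (fun z => v z.1 z.2) 2 (concentrationMeasure (volume.restrict (box d L)) c))
    {φ : EuclideanSpace ℝ (Fin d) → ℝ → ℝ}
    (hφ : ContDiff ℝ 1 fun z : EuclideanSpace ℝ (Fin d) × ℝ => φ z.1 z.2) :
    ∫ t in Icc (0 : ℝ) 1, ∫ x in box d L, c x t *
        (deriv (fun s => φ x s) t + ⟪v x t, gradient (fun y => φ y t) x⟫) =
      ∫ z, fderiv ℝ (fun z : EuclideanSpace ℝ (Fin d) × ℝ => φ z.1 z.2) z (v z.1 z.2, 1)
        ∂concentrationMeasure (volume.restrict (box d L)) c := by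
  have hfin := isFiniteMeasure_concentrationMeasure hrange
  rw [integral_concentrationMeasure hc
    ((ae_mem_Icc_of_forall_box hrange).mono fun _ hz => hz.1) (integrable_fderiv_apply
      (isBounded_box.isCompact_closure.prod isCompact_Icc)
      (ae_mem_closure_box.mono fun z hz => ⟨hz.1, Ioo_subset_Icc_self hz.2⟩) hv hφ)]
  simp_rw [inner_gradient_add_deriv (hφ.differentiable one_ne_zero _)]

theorem relaxedAdmissible_iff_isFlow
    (h₀meas : Measurable ρ₀) (h₁meas : Measurable ρ₁)
    (h₀nonneg : ∀ x, 0 ≤ ρ₀ x) (h₁nonneg : ∀ x, 0 ≤ ρ₁ x)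
    (h₀box : Function.support ρ₀ ⊆ box d L) (h₁box : Function.support ρ₁ ⊆ box d L)
    (hc : Measurable fun z : EuclideanSpace ℝ (Fin d) × ℝ => c z.1 z.2)
    (hv : Measurable fun z : EuclideanSpace ℝ (Fin d) × ℝ => v z.1 z.2)
    (hrange : ∀ x ∈ box d L, ∀ t ∈ Icc (0 : ℝ) 1, c x t ∈ Icc (0 : ℝ) 1) :
    RelaxedAdmissible L ρ₀ ρ₁ c v ↔
      IsFlow (closure (box d L)) (densityMeasure volume ρ₀) (densityMeasure volume ρ₁)
        (concentrationMeasure (volume.restrict (box d L)) c) fun z => v z.1 z.2 := by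
  have henergy := memLp_two_iff_lintegral_norm_sq_lt_top
    (m := concentrationMeasure (volume.restrict (box d L)) c) hv.aestronglyMeasurable
  rw [← lintegral_mul_norm_sq hc hv] at henergy
  constructor
  · rintro ⟨-, -, -, haction, hweak⟩
    have hL2 := henergy.2 haction
    refine ⟨ae_mem_closure_box, hL2, fun φ hφ => ?_⟩
    rw [← setIntegral_box_mul h₀meas h₀nonneg h₀box, ← setIntegral_box_mul h₁meas h₁nonneg h₁box,
      ← hweak (fun x t => φ (x, t)) hφ]
    exact (integral_mul_deriv_add_inner_gradient (φ := fun x t => φ (x, t)) hc hrange hL2 hφ).symm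
  · intro h
    refine ⟨hc, hv, hrange, henergy.1 h.memLp, fun φ hφ => ?_⟩
    rw [setIntegral_box_mul h₀meas h₀nonneg h₀box, setIntegral_box_mul h₁meas h₁nonneg h₁box, 
      integral_mul_deriv_add_inner_gradient hc hrange h.memLp hφ]
    exact h.continuityEquation _ hφ

end Admissible

section LeastAction

/-- The action `∫₀¹ ∫_Ω ½ c |v|² dx dt`. -/
noncomputable abbrev relaxedAction {d : ℕ} (L : ℝ) (c : EuclideanSpace ℝ (Fin d) → ℝ → ℝ)
    (v : EuclideanSpace ℝ (Fin d) → ℝ → EuclideanSpace ℝ (Fin d)) : ℝ≥0∞ :=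
  ∫⁻ t in Icc (0 : ℝ) 1, ∫⁻ x in box d L, ENNReal.ofReal ((1 / 2) * (c x t * ‖v x t‖ ^ 2))

variable {d : ℕ} {L : ℝ} {ρ ρ₀ ρ₁ : EuclideanSpace ℝ (Fin d) → ℝ}
  {ψ : EuclideanSpace ℝ (Fin d) → ℝ} {T : EuclideanSpace ℝ (Fin d) → EuclideanSpace ℝ (Fin d)}
  {K : Set (EuclideanSpace ℝ (Fin d))} {μ ν : Measure (EuclideanSpace ℝ (Fin d))}
  {c : EuclideanSpace ℝ (Fin d) → ℝ → ℝ}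
  {v : EuclideanSpace ℝ (Fin d) → ℝ → EuclideanSpace ℝ (Fin d)}

theorem relaxedAction_eq (hc : Measurable fun z : EuclideanSpace ℝ (Fin d) × ℝ => c z.1 z.2)
    (hv : Measurable fun z : EuclideanSpace ℝ (Fin d) × ℝ => v z.1 z.2)
    (hL2 : MemLp (fun z => v z.1 z.2) 2 (concentrationMeasure (volume.restrict (box d L)) c)) :
    relaxedAction L c v = 2⁻¹ * ENNReal.ofReal
      (∫ z, ‖v z.1 z.2‖ ^ 2 ∂concentrationMeasure (volume.restrict (box d L)) c) := by
  rw [ofReal_integral_eq_lintegral_ofReal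
      ((memLp_two_iff_integrable_sq_norm hv.aestronglyMeasurable).1 hL2)
      (ae_of_all _ fun z => sq_nonneg ‖v z.1 z.2‖),
    ← lintegral_mul_norm_sq hc hv, relaxedAction]
  have htop : (2⁻¹ : ℝ≥0∞) ≠ ⊤ := ENNReal.inv_ne_top.2 two_ne_zero
  simp_rw [ENNReal.ofReal_mul one_half_pos.le, one_div, ENNReal.ofReal_inv_of_pos zero_lt_two,
    ENNReal.ofReal_ofNat, lintegral_const_mul' _ _ htop]

theorem densityMeasure_le_restrict_box (h1 : ∀ x, ρ x ≤ 1) (hbox : Function.support ρ ⊆ box d L) :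
    densityMeasure volume ρ ≤ volume.restrict (box d L) :=
  densityMeasure_restrict_eq isOpen_box.measurableSet hbox ▸ densityMeasure_le (ae_of_all _ h1)

theorem isBrenierMap_of_le_restrict_box (hψ : ConvexOn ℝ univ ψ) (hT : Measurable T)
    (hgrad : ∀ᵐ x, HasGradientAt ψ (T x) x) (hpush : μ.map T = ν)
    (hμ : μ ≤ volume.restrict (box d L)) (hν : ν ≤ volume.restrict (box d L)) :
    IsBrenierMap (closure (box d L)) ψ T μ ν := by
  have hclosure : ∀ᵐ x ∂volume.restrict (box d L), x ∈ closure (box d L) :=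
    (ae_restrict_mem isOpen_box.measurableSet).mono fun _ hx => subset_closure hx
  exact ⟨isBounded_box.isCompact_closure, hψ, hT,
    (Measure.absolutelyContinuous_of_le hμ).ae_le (ae_restrict_of_ae hgrad), hpush,
    (Measure.absolutelyContinuous_of_le hμ).ae_le hclosure,
    (Measure.absolutelyContinuous_of_le hν).ae_le hclosure⟩

theorem IsBrenierMap.exists_isFlow [IsFiniteMeasure μ]
    (hB : IsBrenierMap (closure (box d L)) ψ T μ ν)
    (hμ : μ ≤ volume.restrict (box d L)) (hν : ν ≤ volume.restrict (box d L)) :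
    ∃ (c : EuclideanSpace ℝ (Fin d) → ℝ → ℝ)
      (v : EuclideanSpace ℝ (Fin d) → ℝ → EuclideanSpace ℝ (Fin d)),
      (Measurable fun z : EuclideanSpace ℝ (Fin d) × ℝ => c z.1 z.2) ∧
      (Measurable fun z : EuclideanSpace ℝ (Fin d) × ℝ => v z.1 z.2) ∧
      (∀ x t, c x t ∈ Icc (0 : ℝ) 1) ∧
      (IsFlow (closure (box d L)) μ ν (concentrationMeasure (volume.restrict (box d L)) c)
        fun z => v z.1 z.2) ∧
      relaxedAction L c v = 2⁻¹ * W2sq μ ν ∧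
      ∀ t ∈ Icc (0 : ℝ) 1, densityMeasure (volume.restrict (box d L)) (fun x => c x t) =
        μ.map (displacementMap T t) := by
  obtain ⟨c, hc, hrange, hslice⟩ :=
    hB.exists_density convex_box isOpen_box.measurableSet hμ hν
  have hm := concentrationMeasure_eq_interpolationMeasure hB.measurable hc hslice
  have hv := measurable_interpolationVelocityField hB.convexOn
  have hflow := hB.isFlow convex_box.closure
  rw [← hm] at hflow
  refine ⟨c, fun x t => interpolationVelocityField ψ (x, t), hc, hv, hrange, hflow, ?_, hslice⟩
  have haction := relaxedAction_eq (v := fun x t => interpolationVelocityField ψ (x, t))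
    hc hv hflow.memLp
  rw [haction, hB.W2sq_eq, ← hB.integral_norm_sq_interpolationVelocityField, ← hm]

theorem IsFlow.W2sq_le_relaxedAction [IsFiniteMeasure μ]
    (h : IsFlow K μ ν (concentrationMeasure (volume.restrict (box d L)) c) fun z => v z.1 z.2)
    (hB : IsBrenierMap K ψ T μ ν)
    (hc : Measurable fun z : EuclideanSpace ℝ (Fin d) × ℝ => c z.1 z.2)
    (hv : Measurable fun z : EuclideanSpace ℝ (Fin d) × ℝ => v z.1 z.2)
    (hrange : ∀ x ∈ box d L, ∀ t ∈ Icc (0 : ℝ) 1, c x t ∈ Icc (0 : ℝ) 1) :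
    2⁻¹ * W2sq μ ν ≤ relaxedAction L c v := by
  have hfin := isFiniteMeasure_concentrationMeasure hrange
  rw [relaxedAction_eq hc hv h.memLp, hB.W2sq_eq]
  gcongr
  exact h.transportCost_le hB

theorem IsFlow.ae_densityMeasure_eq [IsFiniteMeasure μ]
    (h : IsFlow K μ ν (concentrationMeasure (volume.restrict (box d L)) c) fun z => v z.1 z.2)
    (hB : IsBrenierMap K ψ T μ ν)
    (hc : Measurable fun z : EuclideanSpace ℝ (Fin d) × ℝ => c z.1 z.2)
    (hv : Measurable fun z : EuclideanSpace ℝ (Fin d) × ℝ => v z.1 z.2)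
    (hrange : ∀ x ∈ box d L, ∀ t ∈ Icc (0 : ℝ) 1, c x t ∈ Icc (0 : ℝ) 1)
    (hmin : relaxedAction L c v = 2⁻¹ * W2sq μ ν)
    (hμ : μ ≤ volume.restrict (box d L)) (hν : ν ≤ volume.restrict (box d L)) :
    ∀ᵐ t ∂volume.restrict (Icc (0 : ℝ) 1),
      densityMeasure (volume.restrict (box d L)) (fun x => c x t) =
        μ.map (displacementMap T t) := by
  have hfin := isFiniteMeasure_concentrationMeasure hrange
  have hcost : ∫ z, ‖v z.1 z.2‖ ^ 2 ∂concentrationMeasure (volume.restrict (box d L)) c ≤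
      transportCost μ T := by
    rw [relaxedAction_eq hc hv h.memLp, hB.W2sq_eq,
      ENNReal.mul_right_inj (by simp) (by simp)] at hmin
    exact (ENNReal.ofReal_le_ofReal_iff (integral_nonneg fun x => sq_nonneg ‖T x - x‖)).1 hmin.le
  obtain ⟨c', hc', -, hslice⟩ :=
    hB.exists_density convex_box isOpen_box.measurableSet hμ hν
  have hm' := concentrationMeasure_eq_interpolationMeasure hB.measurable hc' hslice
  filter_upwards [ae_densityMeasure_eq_of_concentrationMeasure_eq hc hc'
    ((h.eq_interpolationMeasure hB hcost).trans hm'.symm), ae_restrict_mem measurableSet_Icc]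
    with t ht htI using ht.trans (hslice t htI)

end LeastAction

/-- **Theorem 6.2.** For compactly supported densities
`ρ₀, ρ₁ : ℝ^d → [0,1]` in the box `Ω = (−L,L)^d` with equal positive mass, and the
Brenier map `T = ∇ψ` pushing `ρ₀ dx` to `ρ₁ dx` with displacement interpolants
`μ_t = ((1−t)id + tT)_#(ρ₀ dx)`, the infimum of the relaxed kinetic-energy action
`K(c,v) = ∫₀¹∫_Ω ½ c|v|²` over admissible pairs equals `½ d_W(ρ₀ dx, ρ₁ dx)²`; the
infimum is attained by an admissible pair with `c(·,t) dx = μ_t` for all `t`, and every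
minimizing admissible pair satisfies `c(·,t) dx = μ_t` for a.e. `t ∈ [0,1]`. -/
theorem relaxed_two_fluid_least_action
    (d : ℕ) (L : ℝ) (hL : 0 < L)
    (ρ₀ ρ₁ : EuclideanSpace ℝ (Fin d) → ℝ)
    (h₀meas : Measurable ρ₀) (h₁meas : Measurable ρ₁)
    (h₀range : ∀ x, ρ₀ x ∈ Icc (0:ℝ) 1) (h₁range : ∀ x, ρ₁ x ∈ Icc (0:ℝ) 1)
    (h₀supp : HasCompactSupport ρ₀) (h₁supp : HasCompactSupport ρ₁)
    (h₀box : Function.support ρ₀ ⊆ box d L) (h₁box : Function.support ρ₁ ⊆ box d L)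
    (hint : ∫ x, ρ₀ x = ∫ x, ρ₁ x) (hposint : 0 < ∫ x, ρ₀ x)
    (ψ : EuclideanSpace ℝ (Fin d) → ℝ) (hψconv : ConvexOn ℝ Set.univ ψ)
    (T : EuclideanSpace ℝ (Fin d) → EuclideanSpace ℝ (Fin d)) (hT : Measurable T)
    (hgrad : ∀ᵐ x, HasGradientAt ψ (T x) x)
    (hpush : (volume.withDensity fun x => ENNReal.ofReal (ρ₀ x)).map T =
      volume.withDensity fun x => ENNReal.ofReal (ρ₁ x)) :
    (sInf { A | ∃ c v, RelaxedAdmissible L ρ₀ ρ₁ c v ∧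
        A = ∫⁻ t in Icc (0:ℝ) 1, ∫⁻ x in box d L,
          ENNReal.ofReal ((1/2) * (c x t * ‖v x t‖ ^ 2)) } =
      2⁻¹ * W2sq (volume.withDensity fun x => ENNReal.ofReal (ρ₀ x))
        (volume.withDensity fun x => ENNReal.ofReal (ρ₁ x))) ∧
    (∃ c v, RelaxedAdmissible L ρ₀ ρ₁ c v ∧
      (∫⁻ t in Icc (0:ℝ) 1, ∫⁻ x in box d L,
          ENNReal.ofReal ((1/2) * (c x t * ‖v x t‖ ^ 2))) =
        2⁻¹ * W2sq (volume.withDensity fun x => ENNReal.ofReal (ρ₀ x))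
          (volume.withDensity fun x => ENNReal.ofReal (ρ₁ x)) ∧
      ∀ t ∈ Icc (0:ℝ) 1,
        (volume.restrict (box d L)).withDensity (fun x => ENNReal.ofReal (c x t)) =
          (volume.withDensity fun x => ENNReal.ofReal (ρ₀ x)).map
            (fun x => (1 - t) • x + t • T x)) ∧
    (∀ c v, RelaxedAdmissible L ρ₀ ρ₁ c v →
      (∫⁻ t in Icc (0:ℝ) 1, ∫⁻ x in box d L,
          ENNReal.ofReal ((1/2) * (c x t * ‖v x t‖ ^ 2))) =
        2⁻¹ * W2sq (volume.withDensity fun x => ENNReal.ofReal (ρ₀ x))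
          (volume.withDensity fun x => ENNReal.ofReal (ρ₁ x)) →
      ∀ᵐ t ∂(volume.restrict (Icc (0:ℝ) 1)),
        (volume.restrict (box d L)).withDensity (fun x => ENNReal.ofReal (c x t)) =
          (volume.withDensity fun x => ENNReal.ofReal (ρ₀ x)).map
            (fun x => (1 - t) • x + t • T x)) := by
  have hμ := densityMeasure_le_restrict_box (fun x => (h₀range x).2) h₀box
  have hν := densityMeasure_le_restrict_box (fun x => (h₁range x).2) h₁box
  have hfin : IsFiniteMeasure (densityMeasure volume ρ₀) := isFiniteMeasure_of_le _ hμ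
  have hB := isBrenierMap_of_le_restrict_box hψconv hT hgrad hpush hμ hν
  have hiff {c v} := relaxedAdmissible_iff_isFlow (c := c) (v := v) h₀meas h₁meas
    (fun x => (h₀range x).1) (fun x => (h₁range x).1) h₀box h₁box
  have hflow {c v} (ha : RelaxedAdmissible L ρ₀ ρ₁ c v) := (hiff ha.1 ha.2.1 ha.2.2.1).1 ha
  obtain ⟨c, v, hc, hv, hrange, hcv, haction, hslice⟩ := hB.exists_isFlow hμ hν
  have hadm : RelaxedAdmissible L ρ₀ ρ₁ c v := (hiff hc hv fun x _ t _ => hrange x t).2 hcv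
  refine ⟨le_antisymm (sInf_le ⟨c, v, hadm, haction.symm⟩) (le_sInf ?_),
    ⟨c, v, hadm, haction, hslice⟩, fun c' v' ha hmin => ?_⟩
  · rintro A ⟨c', v', ha, rfl⟩
    exact (hflow ha).W2sq_le_relaxedAction hB ha.1 ha.2.1 ha.2.2.1
  · exact (hflow ha).ae_densityMeasure_eq hB ha.1 ha.2.1 ha.2.2.1 hmin hμ hν
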